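/- There exists a function F assigning to every countable set S of ordinals below ω₁ (the least uncountable ordinal) a compact subset F(S) of the Hilbert cube [0,1]^ℕ such that for all countable sets S, T of ordinals below ω₁: S ⊆ T if and only if F(S) is σ-embeddable into F(T). In other words, the inclusion ordering ([ω₁]^{≤ω}, ⊆) order-embeds into the σ-embeddability ordering of compact metrizable spaces. -/

import Mathlib

/-!
The heart of the proof is a transfinite sequence `P α`, `α < ω₁`, of `Gδ` subsets of the Hilbert
cube, none of them a countable union of zero-dimensional sets, such that for `α ≠ β` every subset
of `P α` that embeds into `P β` is zero-dimensional (`exists_family`, `zdim_of_ne`). Each `P α`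
has a compactification whose remainder consists of sequences vanishing from some index on
(`exists_compactification`), which is a countable union of zero-dimensional sets. The set `F S` is
a wedge of shrinking copies of these compactifications for `α ∈ S`. If `S ⊆ T`, the copies in `F S`
are also found in `F T`. If `α ∈ S \ T`, a σ-embedding of `F S` into `F T` would cover `P α` by
countably many sets, each of which embeds into some `P β` with `β ≠ α` or into a
countable-dimensional remainder, so `P α` would be a countable union of zero-dimensional sets.

How embeddings are excluded. Each `P α` is given with a Borel map `f α` recovering a point from its
first coordinate, which lies in a Cantor set. An embedding `φ` of a set `A ⊆ P α` into `P β` is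
described by countably many open sets, hence by some `r` in the Cantor space: `r` tells the first
coordinate of `φ x` from `x`, and `x` from `φ x`. The trap of `f β` consists of the points having a
coordinate equal to a code of such an `r` that reproduces the point itself. If `P α` avoids the
trap, then the coordinates of the points of `A` omit all codes of `r`; these are dense in the
interval, so `A` is zero-dimensional (`zdim_of_trap`). Every trap is captured by a task: a
sequence of continuous functions `ψ i` with a Borel map `F` that predicts the point from the
signs of the `ψ i` (`trapSet_captured`).

How a space avoiding countably many tasks is built. A closed set is essential in a set of
directions if partitions between opposite faces in these directions always have a common point in
it (`Ess`); the whole cube is essential in all directions by the Poincaré–Miranda theorem, which is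
derived from Sperner's lemma modulo 2. On an essential set, `ess_dichotomy` yields for every task
either a zero of some `ψ i` or a region of constant signs that is still essential in infinitely
many directions; in the second case one direction is spent on moving a coordinate away from its
predicted value. Further directions are spent on a coordinate that codes the state of the
construction, and on lying on a partition that misses the `m`-th of countably many given
zero-dimensional sets. The given sets are coded in the initial state, so one and the same space,
`Tasks.space`, contains for every countable family of zero-dimensional sets a point outside all of
them (`Tasks.not_sigmaZD`). It is `Gδ` because the transition between states can be arranged to have
a `Gδ` graph (`exists_gdelta_graph`).
-/

open Set

/-- `X` is σ-embeddable into `Y`: `X` is a countable union of subsets each of which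
(with the subspace topology) is homeomorphic to a subspace of `Y`. -/
def SigmaEmbeddable (X : Type*) (Y : Type*) [TopologicalSpace X] [TopologicalSpace Y] : Prop :=
  ∃ A : ℕ → Set X, (⋃ n, A n) = univ ∧ ∀ n, ∃ B : Set Y, Nonempty (↥(A n) ≃ₜ ↥B)

/-- The least uncountable ordinal `ω₁`. -/
noncomputable def omega1 : Ordinal := (Cardinal.aleph 1).ord

/-! ### Sperner's lemma for Kuhn triangulations, modulo 2 -/

/-- The `i`-th vertex of the Kuhn simplex with least corner `z` in which the coordinate `c` is
raised at step `τ c`. -/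
def kuhnVertex {n : ℕ} (z : Fin n → ℕ) (τ : Equiv.Perm (Fin n)) (i : ℕ) : Fin n → ℕ :=
  fun c => z c + if (τ c : ℕ) < i then 1 else 0

/-- The facets opposite to an interior vertex cancel in pairs. -/
lemma kuhn_inner_facets {n : ℕ} (Δ : (Fin n → Fin n → ℕ) → ZMod 2) (z : Fin n → ℕ)
    (k : Fin (n + 1)) (h0 : 0 < (k : ℕ)) (hn : (k : ℕ) < n) :
    ∑ τ : Equiv.Perm (Fin n), Δ (fun i => kuhnVertex z τ (k.succAbove i)) = 0 := by
  classical
  set a : Fin n := ⟨k - 1, by omega⟩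
  set b : Fin n := ⟨k, hn⟩
  have hab : a ≠ b := by intro h; have := congrArg Fin.val h; simp [a, b] at this; omega
  refine Finset.sum_involution (fun τ _ => Equiv.swap a b * τ) ?_ ?_ ?_ ?_
  · intro τ _
    have : (fun i => kuhnVertex z (Equiv.swap a b * τ) (k.succAbove i)) =
        fun i => kuhnVertex z τ (k.succAbove i) := by
      funext i c
      have hne : (k.succAbove i : ℕ) ≠ k := fun h => Fin.succAbove_ne k i (Fin.ext h)
      simp only [kuhnVertex, Equiv.Perm.mul_apply]
      have : ((Equiv.swap a b (τ c) : Fin n) : ℕ) < (k.succAbove i : ℕ) ↔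
          (τ c : ℕ) < (k.succAbove i : ℕ) := by
        rw [Equiv.swap_apply_def]
        split_ifs with h1 h2
        · rw [h1]; simp only [a, b]; omega
        · rw [h2]; simp only [a, b]; omega
        · rfl
      simp only [this]
    rw [this]; exact CharTwo.add_self_eq_zero _
  · intro τ _ _ h
    have h1 : Equiv.swap a b = 1 := by simpa using h
    exact hab (Equiv.swap_eq_one_iff.mp h1)
  · intros; exact Finset.mem_univ _
  · intro τ _; simp [← mul_assoc]

/-- The facet of a Kuhn simplex on which the coordinate `τ⁻¹ 0` is constant. -/
def kuhnFacet {m : ℕ} (z : Fin (m + 1) → ℕ) (τ : Equiv.Perm (Fin (m + 1))) (i : Fin (m + 1)) :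
    Fin (m + 1) → ℕ :=
  fun c => z c + if τ c ≠ 0 ∧ (τ c : ℕ) ≤ i then 1 else 0

lemma sum_telescope_two (N : ℕ) (G : ℕ → ZMod 2) :
    ∑ a : Fin N, (G (a + 1) + G a) = G N + G 0 := by
  rw [Fin.sum_univ_eq_sum_range (fun a => G (a + 1) + G a)]
  induction N with
  | zero => simp [CharTwo.add_self_eq_zero]
  | succ N ih =>
    rw [Finset.sum_range_succ, ih]
    have := CharTwo.add_self_eq_zero (G N)
    linear_combination this

/-- Stokes' formula for a Kuhn-triangulated cube with coefficients in `ZMod 2`: only the facets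
on the boundary of the cube survive. -/
lemma kuhn_stokes {m : ℕ} (N : ℕ) (Δ : (Fin (m + 1) → Fin (m + 1) → ℕ) → ZMod 2) :
    ∑ z : Fin (m + 1) → Fin N, ∑ τ : Equiv.Perm (Fin (m + 1)), ∑ k : Fin (m + 2),
      Δ (fun i => kuhnVertex (fun c => z c) τ (k.succAbove i)) =
    ∑ τ : Equiv.Perm (Fin (m + 1)), ∑ y : Fin m → Fin N,
      (Δ (kuhnFacet ((τ⁻¹ 0).insertNth N (fun c => (y c : ℕ))) τ) +
       Δ (kuhnFacet ((τ⁻¹ 0).insertNth 0 (fun c => (y c : ℕ))) τ)) := by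
  classical
  have key : ∀ z : Fin (m + 1) → ℕ, ∑ τ : Equiv.Perm (Fin (m + 1)), ∑ k : Fin (m + 2),
      Δ (fun i => kuhnVertex z τ (k.succAbove i)) =
      ∑ τ : Equiv.Perm (Fin (m + 1)),
        (Δ (kuhnFacet (z + Pi.single (τ⁻¹ 0) 1) τ) + Δ (kuhnFacet z τ)) := by
    intro z
    rw [Finset.sum_comm, Fin.sum_univ_succ, Fin.sum_univ_castSucc]
    rw [Finset.sum_eq_zero (s := (Finset.univ : Finset (Fin m)))]
    · rw [zero_add, Finset.sum_add_distrib]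
      congr 1
      · refine Finset.sum_congr rfl fun τ _ => ?_
        congr 1
        funext i c
        simp only [kuhnVertex, kuhnFacet, Pi.add_apply, Fin.zero_succAbove, Fin.val_succ]
        by_cases hc : τ c = 0
        · have : c = τ⁻¹ 0 := by rw [← hc]; simp
          subst this; simp
        · have : c ≠ τ⁻¹ 0 := by rintro rfl; simp at hc
          rw [Pi.single_apply, if_neg this]
          simp [hc]
      · rw [← Equiv.sum_comp (Equiv.mulLeft (finRotate (m + 1))) (fun τ => Δ (kuhnFacet z τ))]
        refine Finset.sum_congr rfl fun τ _ => ?_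
        congr 1
        funext i c
        have hi := i.2
        refine congrArg (z c + ·) (if_congr ?_ rfl rfl)
        change (τ c : ℕ) < _ ↔ finRotate (m + 1) (τ c) ≠ 0 ∧
          ((finRotate (m + 1) (τ c) : Fin (m + 1)) : ℕ) ≤ i
        rw [Fin.succ_last, Fin.succAbove_last, Fin.val_castSucc]
        by_cases hc : τ c = Fin.last m
        · rw [hc, finRotate_last]
          simp only [Fin.val_last, ne_eq, not_true_eq_false, false_and, iff_false]
          omega
        · have h1 : ((finRotate (m + 1) (τ c) : Fin (m + 1)) : ℕ) = τ c + 1 :=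
            coe_finRotate_of_ne_last hc
          have h2 : finRotate (m + 1) (τ c) ≠ 0 := by
            intro h; rw [h] at h1; simp at h1
          rw [h1]
          exact ⟨fun h => ⟨h2, h⟩, fun h => h.2⟩
    · intro k _
      exact kuhn_inner_facets Δ z _ (by simp) (by simp)
  simp_rw [key]
  rw [Finset.sum_comm]
  refine Finset.sum_congr rfl fun τ _ => ?_
  set j := τ⁻¹ 0
  rw [← Equiv.sum_comp (Fin.insertNthEquiv (fun _ => Fin N) j), Fintype.sum_prod_type,
    Finset.sum_comm]
  refine Finset.sum_congr rfl fun y _ => ?_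
  rw [← sum_telescope_two N (fun a => Δ (kuhnFacet (j.insertNth a (fun c => (y c : ℕ))) τ))]
  refine Finset.sum_congr rfl fun a _ => ?_
  have hz : (fun c => ((Fin.insertNthEquiv (fun _ => Fin N) j (a, y) c : Fin N) : ℕ)) =
      j.insertNth (a : ℕ) (fun c => (y c : ℕ)) := by
    funext c
    refine Fin.succAboveCases j ?_ (fun i => ?_) c <;> simp
  rw [hz]
  congr 3
  funext c
  refine Fin.succAboveCases j ?_ (fun i => ?_) c <;> simp

/-- Sperner's lemma in determinant form, by induction on the dimension. Expand each determinant
along its first column, which consists of ones, and apply `kuhn_stokes`: on the facets in the other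
boundary faces a column vanishes or two columns agree, so only the top face of the coordinate `0`
contributes. -/
lemma kuhn_det_sum {n : ℕ} : ∀ (N : ℕ) (H : Fin (n + 1) → (Fin n → ℕ) → ZMod 2)
    (_ : ∀ x, H 0 x = 1) (_ : ∀ (j : Fin n) x, x j = 0 → H j.succ x = 0)
    (_ : ∀ (j : Fin n) x, x j = N → H j.succ x = H j.castSucc x),
    ∑ z : Fin n → Fin N, ∑ τ : Equiv.Perm (Fin n),
      Matrix.det (Matrix.of fun (i j : Fin (n + 1)) => H j (kuhnVertex (fun c => z c) τ i)) = 1 := by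
  induction n with
  | zero => intro N H h0 _ _; simp [h0]
  | succ m ih =>
    intro N H h0 hz hN
    have e1 : ∀ (z : Fin (m + 1) → Fin N) (τ : Equiv.Perm (Fin (m + 1))),
        Matrix.det (Matrix.of fun (i j : Fin (m + 2)) => H j (kuhnVertex (fun c => z c) τ i)) =
        ∑ k : Fin (m + 2), (fun w : Fin (m + 1) → Fin (m + 1) → ℕ =>
          Matrix.det (Matrix.of fun i j : Fin (m + 1) => H j.succ (w i)))
            (fun i => kuhnVertex (fun c => z c) τ (k.succAbove i)) := by
      intro z τ
      rw [Matrix.det_succ_column_zero]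
      refine Finset.sum_congr rfl fun k _ => ?_
      have : (-1 : ZMod 2) = 1 := by decide
      simp only [this, one_pow, one_mul, Matrix.of_apply, h0]
      rfl
    simp_rw [e1]
    rw [kuhn_stokes N (fun w : Fin (m + 1) → Fin (m + 1) → ℕ =>
          Matrix.det (Matrix.of fun i j : Fin (m + 1) => H j.succ (w i)))]
    have hco : ∀ (τ : Equiv.Perm (Fin (m + 1))) (a : ℕ) (y : Fin m → Fin N) (i : Fin (m + 1)),
        kuhnFacet ((τ⁻¹ 0).insertNth a (fun c => (y c : ℕ))) τ i (τ⁻¹ 0) = a := by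
      intro τ a y i; simp [kuhnFacet]
    have hzero : ∀ (τ : Equiv.Perm (Fin (m + 1))) (y : Fin m → Fin N),
        Matrix.det (Matrix.of fun i j : Fin (m + 1) => H j.succ
          (kuhnFacet ((τ⁻¹ 0).insertNth 0 (fun c => (y c : ℕ))) τ i)) = 0 := by
      intro τ y
      refine Matrix.det_eq_zero_of_column_eq_zero (τ⁻¹ 0) fun i => ?_
      exact hz _ _ (hco _ _ _ _)
    have hNz : ∀ (τ : Equiv.Perm (Fin (m + 1))) (y : Fin m → Fin N), τ⁻¹ 0 ≠ 0 →
        Matrix.det (Matrix.of fun i j : Fin (m + 1) => H j.succ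
          (kuhnFacet ((τ⁻¹ 0).insertNth N (fun c => (y c : ℕ))) τ i)) = 0 := by
      intro τ y hj
      obtain ⟨j', hj'⟩ := Fin.exists_succ_eq.mpr hj
      refine Matrix.det_zero_of_column_eq (i := τ⁻¹ 0) (j := j'.castSucc) ?_ fun i => ?_
      · rw [← hj']; exact (Fin.castSucc_lt_succ).ne'
      · simp only [Matrix.of_apply]
        rw [hN _ _ (hco _ _ _ _), ← hj', Fin.succ_castSucc]
    simp only [hzero, add_zero]
    rw [← Equiv.sum_comp (Equiv.Perm.decomposeFin).symm, Fintype.sum_prod_type, Fin.sum_univ_succ]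
    rw [Finset.sum_eq_zero (s := (Finset.univ : Finset (Fin m))), add_zero]
    · rw [Finset.sum_comm]
      rw [← ih N (fun j x => H j.succ (Fin.cons N x)) ?_ ?_ ?_]
      · refine Finset.sum_congr rfl fun y _ => Finset.sum_congr rfl fun e _ => ?_
        congr 1
        ext i j
        simp only [Matrix.of_apply]
        congr 1
        have hz0 : (Equiv.Perm.decomposeFin.symm (0, e))⁻¹ 0 = 0 := by
          rw [Equiv.Perm.inv_eq_iff_eq]; simp
        funext c
        rw [hz0]
        refine Fin.cases ?_ (fun c => ?_) c
        · simp [kuhnFacet]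
        · simp [kuhnFacet, kuhnVertex]
      · intro x
        have := hN 0 (Fin.cons N x) (by simp)
        rw [this]; simp [h0]
      · intro j x hx
        exact hz j.succ _ (by simpa using hx)
      · intro j x hx
        have := hN j.succ (Fin.cons N x) (by simpa using hx)
        rw [this, Fin.succ_castSucc]
    · intro p _
      refine Finset.sum_eq_zero fun e _ => Finset.sum_eq_zero fun y _ => hNz _ _ ?_
      rw [Ne, Equiv.Perm.inv_eq_iff_eq]
      simp [Fin.ext_iff]

/-! ### Essential families of faces of the Hilbert cube -/

/-- A discrete Poincaré–Miranda theorem: if each `f i` is false on the bottom face and true on the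
top face in direction `i`, then some unit cell contains vertices of both kinds for every `i`. -/
lemma kuhn_cell {n : ℕ} (N : ℕ) (f : Fin n → (Fin n → ℕ) → Prop)
    (h0 : ∀ i x, x i = 0 → ¬ f i x) (hN : ∀ i x, x i = N → f i x) :
    ∃ z : Fin n → ℕ, ∀ i, ∃ v w : Fin n → ℕ, (∀ c, z c ≤ v c ∧ v c ≤ z c + 1) ∧
      (∀ c, z c ≤ w c ∧ w c ≤ z c + 1) ∧ f i v ∧ ¬ f i w := by
  classical
  -- If some `f i` is constant on a Kuhn simplex, then the last column of the matrix of `H` vanishes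
  -- or two adjacent columns agree, so a nonzero determinant marks the required cell.
  set H : Fin (n + 1) → (Fin n → ℕ) → ZMod 2 := fun j x =>
    if ∀ i : Fin n, (i : ℕ) < j → f i x then 1 else 0 with hH
  have hb : ∀ (z : Fin n → ℕ) τ i c, z c ≤ kuhnVertex z τ i c ∧ kuhnVertex z τ i c ≤ z c + 1 := by
    intro z τ i c; unfold kuhnVertex; split_ifs <;> omega
  have hS := kuhn_det_sum N H (by intro x; simp [hH])
    (by
      intro j x hx
      simp only [hH]
      rw [if_neg]
      intro h; exact h0 j x hx (h j (by simp)))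
    (by
      intro j x hx
      simp only [hH]
      refine if_congr ?_ rfl rfl
      constructor
      · intro h i hi; exact h i (by simp at hi ⊢; omega)
      · intro h i hi
        by_cases hij : i = j
        · subst hij; exact hN i x hx
        · refine h i ?_
          have : (i : ℕ) ≠ j := fun e => hij (Fin.ext e)
          simp at hi ⊢; omega)
  obtain ⟨z, τ, hd⟩ : ∃ (z : Fin n → Fin N) (τ : Equiv.Perm (Fin n)),
      Matrix.det (Matrix.of fun (i j : Fin (n + 1)) =>
        H j (kuhnVertex (fun c => z c) τ i)) ≠ 0 := by
    by_contra! hc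
    simp [hc] at hS
  refine ⟨fun c => z c, fun i => ?_⟩
  obtain ⟨r, hr⟩ : ∃ r : Fin (n + 1), H (Fin.last n) (kuhnVertex (fun c => z c) τ r) ≠ 0 := by
    by_contra! hc
    exact hd (Matrix.det_eq_zero_of_column_eq_zero (Fin.last n) hc)
  obtain ⟨s, hs⟩ : ∃ s : Fin (n + 1), H i.succ (kuhnVertex (fun c => z c) τ s) ≠
      H i.castSucc (kuhnVertex (fun c => z c) τ s) := by
    by_contra! hc
    exact hd (Matrix.det_zero_of_column_eq (i := i.succ) (j := i.castSucc)
      (Fin.castSucc_lt_succ).ne' hc)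
  refine ⟨_, _, hb _ τ r, hb _ τ s, ?_, ?_⟩
  · by_contra hf
    apply hr
    simp only [hH]
    rw [if_neg]
    intro h; exact hf (h i (by simp))
  · intro hf
    apply hs
    simp only [hH]
    refine if_congr ?_ rfl rfl
    constructor
    · intro h j hj; exact h j (by simp at hj ⊢; omega)
    · intro h j hij
      by_cases hji : j = i
      · subst hji; exact hf
      · refine h j ?_
        have : (j : ℕ) ≠ i := fun e => hji (Fin.ext e)
        simp at hij ⊢; omega

/-- The Hilbert cube. -/
abbrev HC := ℕ → unitInterval

/-- The Cantor space. -/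
abbrev Cn := ℕ → Bool

/-- The zero set of `g` weakly separates the two faces of the Hilbert cube in direction `k`. -/
structure Adm1 (k : ℕ) (g : HC → ℝ) : Prop where
  cont : Continuous g
  nonpos : ∀ x : HC, x k = 0 → g x ≤ 0
  nonneg : ∀ x : HC, x k = 1 → 0 ≤ g x

/-- The Poincaré–Miranda theorem, obtained from `kuhn_cell` on finer and finer grids in the first
`n` coordinates and compactness. -/
lemma miranda_fin (n : ℕ) (g : ℕ → HC → ℝ) (hg : ∀ k, Adm1 k (g k)) :
    ∃ x : HC, ∀ k < n, g k x = 0 := by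
  classical
  set p : ℕ → (Fin n → ℕ) → HC := fun N x k =>
    if h : k < n then Set.projIcc 0 1 zero_le_one ((x ⟨k, h⟩ : ℝ) / N) else 0 with hp
  have hp0 : ∀ N x (i : Fin n), x i = 0 → p N x i = 0 := by
    intro N x i hx
    simp only [hp, i.2, dite_true, Fin.eta, hx]
    apply Subtype.ext; simp [Set.projIcc]
  have hp1 : ∀ N x (i : Fin n), 0 < N → x i = N → p N x i = 1 := by
    intro N x i hN hx
    have : (N : ℝ) / N = 1 := div_self (by positivity)
    simp only [hp, i.2, dite_true, Fin.eta, hx, this]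
    apply Subtype.ext; simp [Set.projIcc]
  have hpd : ∀ (N : ℕ) (x y : Fin n → ℕ), (∀ c, x c ≤ y c ∧ y c ≤ x c + 1) →
      ∀ k, dist (p N y k) (p N x k) ≤ 1 / (N : ℝ) := by
    intro N x y hxy k
    simp only [hp]
    split_ifs with h
    · rw [Subtype.dist_eq, Real.dist_eq]
      refine (abs_projIcc_sub_projIcc _).trans ?_
      rw [← sub_div, abs_div, Nat.abs_cast]
      refine div_le_div_of_nonneg_right ?_ (Nat.cast_nonneg _)
      obtain ⟨h1, h2⟩ := hxy ⟨k, h⟩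
      have h1' : (x ⟨k, h⟩ : ℝ) ≤ y ⟨k, h⟩ := by exact_mod_cast h1
      have h2' : (y ⟨k, h⟩ : ℝ) ≤ x ⟨k, h⟩ + 1 := by exact_mod_cast h2
      rw [abs_le]; constructor <;> linarith
    · simp
  have key : ∀ N : ℕ, ∃ z : Fin n → ℕ, ∀ i : Fin n, ∃ v w : Fin n → ℕ,
      (∀ c, z c ≤ v c ∧ v c ≤ z c + 1) ∧ (∀ c, z c ≤ w c ∧ w c ≤ z c + 1) ∧
      0 ≤ g i (p (N + 1) v) ∧ g i (p (N + 1) w) ≤ 0 := by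
    intro N
    obtain ⟨z, hz⟩ := kuhn_cell (N + 1)
      (fun i x => x i ≠ 0 ∧ (x i = N + 1 ∨ 0 < g i (p (N + 1) x)))
      (fun i x hx h => h.1 hx) (fun i x hx => ⟨by omega, Or.inl hx⟩)
    refine ⟨z, fun i => ?_⟩
    obtain ⟨v, w, hv, hw, hfv, hfw⟩ := hz i
    refine ⟨v, w, hv, hw, ?_, ?_⟩
    · rcases hfv.2 with h | h
      · exact (hg i).nonneg _ (hp1 _ _ _ (by omega) h)
      · exact h.le
    · by_cases hw0 : w i = 0
      · exact (hg i).nonpos _ (hp0 _ _ _ hw0)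
      · by_contra hc
        exact hfw ⟨hw0, Or.inr (not_le.mp hc)⟩
  choose z v w hv hw hpos hneg using key
  obtain ⟨x, φ, hφ, hx⟩ := CompactSpace.tendsto_subseq (fun N => p (N + 1) (z N))
  have lim0 : Filter.Tendsto (fun N => 1 / ((φ N : ℝ) + 1)) Filter.atTop (nhds 0) :=
    tendsto_one_div_add_atTop_nhds_zero_nat.comp hφ.tendsto_atTop
  have hlim : ∀ u : ℕ → Fin n → ℕ, (∀ N c, z N c ≤ u N c ∧ u N c ≤ z N c + 1) →
      Filter.Tendsto (fun N => p (φ N + 1) (u (φ N))) Filter.atTop (nhds x) := by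
    intro u hu
    rw [tendsto_pi_nhds] at hx ⊢
    intro k
    refine (tendsto_iff_of_dist ?_).mp (hx k)
    refine squeeze_zero (fun _ => dist_nonneg) (fun N => ?_) lim0
    have := hpd (φ N + 1) _ _ (hu (φ N)) k
    rw [dist_comm]
    simpa using this
  refine ⟨x, fun k hk => le_antisymm ?_ ?_⟩
  · exact le_of_tendsto (((hg k).cont.tendsto x).comp (hlim (fun N => w N ⟨k, hk⟩)
      (fun N => hw N ⟨k, hk⟩))) (Filter.Eventually.of_forall fun N => hneg _ ⟨k, hk⟩)
  · exact ge_of_tendsto (((hg k).cont.tendsto x).comp (hlim (fun N => v N ⟨k, hk⟩)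
      (fun N => hv N ⟨k, hk⟩))) (Filter.Eventually.of_forall fun N => hpos _ ⟨k, hk⟩)

/-- The faces of the Hilbert cube in the directions of `M` form an essential family on `K`: any
choice of separators for these directions has a common zero in `K`. -/
def Ess (K : Set HC) (M : Set ℕ) : Prop :=
  ∀ g : ℕ → HC → ℝ, (∀ k, Adm1 k (g k)) → ∃ x ∈ K, ∀ k ∈ M, g k x = 0

lemma adm1_coord (k : ℕ) (t : unitInterval) : Adm1 k (fun x => (x k : ℝ) - t) where
  cont := by fun_prop
  nonpos x hx := by simp [hx, t.2.1]
  nonneg x hx := by simp [hx, t.2.2]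

lemma Ess.mono {K K' : Set HC} {M M' : Set ℕ} (h : Ess K M) (hK : K ⊆ K') (hM : M' ⊆ M) :
    Ess K' M' := fun g hg =>
  let ⟨x, hx, hz⟩ := h g hg
  ⟨x, hK hx, fun k hk => hz k (hM hk)⟩

lemma Ess.nonempty {K : Set HC} {M : Set ℕ} (h : Ess K M) : K.Nonempty :=
  let ⟨x, hx, _⟩ := h _ (fun k => adm1_coord k 0)
  ⟨x, hx⟩

lemma Ess.iInter {K : ℕ → Set HC} {M : Set ℕ} (hK : ∀ n, IsClosed (K n)) (ha : Antitone K)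
    (h : ∀ n, Ess (K n) M) : Ess (⋂ n, K n) M := by
  intro g hg
  have hz : IsClosed {x | ∀ k ∈ M, g k x = 0} := by
    simp only [ofPred_forall]
    exact isClosed_iInter fun k => isClosed_iInter fun _ =>
      isClosed_eq (hg k).cont continuous_const
  obtain ⟨x, hx⟩ := IsCompact.nonempty_iInter_of_sequence_nonempty_isCompact_isClosed
    (fun n => K n ∩ {x | ∀ k ∈ M, g k x = 0})
    (fun n => inter_subset_inter_left _ (ha (Nat.le_succ n)))
    (fun n => let ⟨x, hx, hz⟩ := h n g hg; ⟨x, hx, hz⟩)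
    ((hK 0).inter hz).isCompact (fun n => (hK n).inter hz)
  rw [mem_iInter] at hx
  exact ⟨x, mem_iInter.mpr fun n => (hx n).1, (hx 0).2⟩

lemma ess_univ : Ess univ univ := by
  intro g hg
  obtain ⟨x, hx⟩ := IsCompact.nonempty_iInter_of_sequence_nonempty_isCompact_isClosed
    (fun n => {x : HC | ∀ k < n, g k x = 0})
    (fun n x hx k hk => hx k (hk.trans (Nat.lt_succ_self n)))
    (fun n => miranda_fin n g hg)
    (by simp [isCompact_univ]) (fun n => by
      simp only [ofPred_forall]
      exact isClosed_iInter fun k => isClosed_iInter fun _ =>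
        isClosed_eq (hg k).cont continuous_const)
  rw [mem_iInter] at hx
  exact ⟨x, mem_univ x, fun k _ => hx (k + 1) k (Nat.lt_succ_self k)⟩

/-- Cutting with a separator costs only the direction it separates. -/
lemma Ess.cut {K : Set HC} {M : Set ℕ} {k : ℕ} (h : Ess K M) (hk : k ∈ M) {f : HC → ℝ}
    (hf : Adm1 k f) : Ess (K ∩ {x | f x = 0}) (M \ {k}) := by
  classical
  intro g hg
  obtain ⟨x, hx, hz⟩ := h (Function.update g k f) (by
    intro j
    by_cases hj : j = k
    · subst hj; simpa using hf
    · simpa [hj] using hg j)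
  refine ⟨x, ⟨hx, by simpa using hz k hk⟩, fun j hj => ?_⟩
  have := hz j hj.1
  rwa [Function.update_of_ne (by simpa using hj.2)] at this

/-- Being essential is a closed condition on the parameter of a closed family of sets, because
projection along the compact cube is a closed map. -/
lemma isClosed_setOf_ess {A : Type*} [TopologicalSpace A] {R : Set (A × HC)} (hR : IsClosed R)
    (M : Set ℕ) : IsClosed {a | Ess {x | (a, x) ∈ R} M} := by
  simp only [Ess, ofPred_forall]
  refine isClosed_iInter fun g => isClosed_iInter fun hg => ?_
  have hz : IsClosed {x | ∀ k ∈ M, g k x = 0} := by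
    simp only [ofPred_forall]
    exact isClosed_iInter fun k => isClosed_iInter fun _ =>
      isClosed_eq (hg k).cont continuous_const
  have := isClosedMap_fst_of_compactSpace (X := A) (Y := HC) _
    (hR.inter (hz.preimage continuous_snd))
  convert this using 1
  ext a
  simp [and_comm]

/-- The closed region on which `ψ i` has the weak sign prescribed by `z i`, for all `i`. -/
def signSet (ψ : ℕ → HC → ℝ) (z : Cn) : Set HC :=
  {x | ∀ i, if z i then 0 ≤ ψ i x else ψ i x ≤ 0}

lemma isClosed_half {f : HC → ℝ} (hf : Continuous f) (b : Bool) :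
    IsClosed {x | if b then 0 ≤ f x else f x ≤ 0} := by
  cases b
  · simpa using isClosed_le hf continuous_const
  · simpa using isClosed_le continuous_const hf

/-- If the zero set of `ψ` is not essential in the directions of `W`, then one of the two sides of
`ψ` is essential in the directions of `E`: separators witnessing the failure on both sides could
be glued along the common zero set of the separators for `W`, which misses `{ψ = 0}`. -/
lemma ess_step {K : Set HC} (hK : IsClosed K) {ψ : HC → ℝ} (hψ : Continuous ψ) {E W M : Set ℕ}
    (hd : Disjoint E W) (hM : E ∪ W ⊆ M) (h : Ess K M) (hn : ¬ Ess (K ∩ {x | ψ x = 0}) W) :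
    ∃ b : Bool, Ess (K ∩ {x | if b then 0 ≤ ψ x else ψ x ≤ 0}) E := by
  classical
  by_contra! hc
  have hc1 := hc true
  have hc0 := hc false
  simp only [Ess] at hn hc1 hc0
  push Not at hn hc1 hc0
  obtain ⟨g, hg, hgz⟩ := hn
  obtain ⟨b, hb, hbz⟩ := hc1
  obtain ⟨a, ha, haz⟩ := hc0
  set L : Set HC := K ∩ {x | ∀ k ∈ W, g k x = 0} with hL
  have hLc : IsClosed L := by
    refine hK.inter ?_
    simp only [ofPred_forall]
    exact isClosed_iInter fun k => isClosed_iInter fun _ =>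
      isClosed_eq (hg k).cont continuous_const
  obtain ⟨lam, hl0, hl1, hl⟩ := exists_continuous_zero_one_of_isClosed
    (s := L ∩ {x | ψ x ≤ 0}) (t := L ∩ {x | 0 ≤ ψ x})
    (hLc.inter (isClosed_le hψ continuous_const)) (hLc.inter (isClosed_le continuous_const hψ))
    (by
      rw [Set.disjoint_left]
      rintro x ⟨hx, h1⟩ ⟨_, h2⟩
      obtain ⟨k, hk, hk2⟩ := hgz x ⟨hx.1, le_antisymm h1 h2⟩
      exact hk2 (hx.2 k hk))
  obtain ⟨x, hx, hz⟩ := h (fun k => if k ∈ W then g k else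
    fun x => (1 - lam x) * a k x + lam x * b k x) (by
      intro k
      by_cases hk : k ∈ W
      · simpa [hk] using hg k
      · simp only [hk, if_false]
        refine ⟨?_, fun x hx => ?_, fun x hx => ?_⟩
        · have := (ha k).cont
          have := (hb k).cont
          fun_prop
        · have h1 := (ha k).nonpos x hx
          have h2 := (hb k).nonpos x hx
          nlinarith [(hl x).1, (hl x).2]
        · have h1 := (ha k).nonneg x hx
          have h2 := (hb k).nonneg x hx
          have := mul_nonneg (sub_nonneg.mpr (hl x).2) h1
          have := mul_nonneg (hl x).1 h2
          linarith)
  have hxL : x ∈ L := ⟨hx, fun k hk => by simpa [hk] using hz k (hM (Or.inr hk))⟩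
  have hE : ∀ k ∈ E, (1 - lam x) * a k x + lam x * b k x = 0 := by
    intro k hk
    have := hz k (hM (Or.inl hk))
    simpa [Set.disjoint_left.mp hd hk] using this
  rcases le_total (ψ x) 0 with hs | hs
  · obtain ⟨k, hk, hk2⟩ := haz x ⟨hx, by simpa using hs⟩
    have h0 : lam x = 0 := hl0 ⟨hxL, hs⟩
    have := hE k hk
    rw [h0] at this
    exact hk2 (by simpa using this)
  · obtain ⟨k, hk, hk2⟩ := hbz x ⟨hx, by simpa using hs⟩
    have h0 : lam x = 1 := hl1 ⟨hxL, hs⟩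
    have := hE k hk
    rw [h0] at this
    exact hk2 (by simpa using this)

/-- The dichotomy lemma: on an essential set, one of the sets `{ψ i = 0}` is still essential in
the directions of `W i`, or some region determined by a sign sequence is essential in the
directions of `E`. -/
lemma ess_dichotomy {K : Set HC} (hK : IsClosed K) {ψ : ℕ → HC → ℝ} (hψ : ∀ i, Continuous (ψ i))
    {E : Set ℕ} {W : ℕ → Set ℕ} (hE : ∀ i, Disjoint E (W i))
    (hW : ∀ i j, i ≠ j → Disjoint (W i) (W j)) (h : Ess K (E ∪ ⋃ i, W i)) :
    (∃ z, Ess (K ∩ signSet ψ z) E) ∨ ∃ i, Ess (K ∩ {x | ψ i x = 0}) (W i) := by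
  classical
  by_cases hn : ∃ i, Ess (K ∩ {x | ψ i x = 0}) (W i)
  · exact Or.inr hn
  push Not at hn
  left
  set M : ℕ → Set ℕ := fun n => E ∪ ⋃ i, ⋃ (_ : n ≤ i), W i
  set S : ℕ → Cn → Set HC := fun n z => K ∩ {x | ∀ i < n, if z i then 0 ≤ ψ i x else ψ i x ≤ 0}
    with hS
  have hSc : ∀ n z, IsClosed (S n z) := by
    intro n z
    refine hK.inter ?_
    simp only [ofPred_forall]
    exact isClosed_iInter fun k => isClosed_iInter fun _ => isClosed_half (hψ k) _
  have step : ∀ n (z : Cn), Ess (S n z) (M n) → ∃ b : Bool,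
      Ess (S n z ∩ {x | if b then 0 ≤ ψ n x else ψ n x ≤ 0}) (M (n + 1)) := by
    intro n z hz
    refine ess_step (hSc n z) (hψ n) (W := W n) ?_ ?_ hz
      (fun hh => hn n (hh.mono (inter_subset_inter_left _ inter_subset_left) subset_rfl))
    · rw [Set.disjoint_union_left]
      refine ⟨hE n, ?_⟩
      simp only [Set.disjoint_iUnion_left]
      exact fun i hi => hW i n (by omega)
    · rintro k ((hk | hk) | hk)
      · exact Or.inl hk
      · right
        simp only [mem_iUnion] at hk ⊢
        obtain ⟨i, hi, hk⟩ := hk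
        exact ⟨i, by omega, hk⟩
      · right
        simp only [mem_iUnion]
        exact ⟨n, le_rfl, hk⟩
  -- the finite stages, stored as sequences that are only meaningful below the stage
  have hex : ∀ n, ∀ z : {z : Cn // Ess (S n z) (M n)},
      ∃ z' : {z : Cn // Ess (S (n + 1) z) (M (n + 1))}, ∀ i < n, z'.1 i = z.1 i := by
    intro n z
    obtain ⟨b, hb⟩ := step n z.1 z.2
    refine ⟨⟨Function.update z.1 n b, hb.mono ?_ subset_rfl⟩, fun i hi => ?_⟩
    · rintro x ⟨⟨hx, hx2⟩, hx3⟩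
      refine ⟨hx, fun i hi => ?_⟩
      rcases Nat.lt_succ_iff_lt_or_eq.mp hi with h1 | h1
      · rw [Function.update_of_ne h1.ne]; exact hx2 i h1
      · subst h1; simpa using hx3
    · simp [hi.ne]
  choose nxt hnxt using hex
  have h0 : Ess (S 0 (fun _ => true)) (M 0) := by
    refine h.mono (fun x hx => ⟨hx, by simp⟩) ?_
    simp [M]
  set seq : ∀ n, {z : Cn // Ess (S n z) (M n)} := fun n =>
    Nat.rec ⟨_, h0⟩ (fun n z => nxt n z) n with hseq
  have hsucc : ∀ n, seq (n + 1) = nxt n (seq n) := fun n => rfl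
  have hstab : ∀ i n, i + 1 ≤ n → (seq n).1 i = (seq (i + 1)).1 i := by
    intro i n hin
    induction n, hin using Nat.le_induction with
    | base => rfl
    | succ n hn ih => rw [hsucc, hnxt n (seq n) i (by omega), ih]
  set z : Cn := fun i => (seq (i + 1)).1 i
  have hSz : ∀ n, S n z = S n (seq n).1 := by
    intro n
    simp only [hS]
    congr 1
    ext x
    refine forall_congr' fun i => forall_congr' fun hi => ?_
    rw [hstab i n hi]
  refine ⟨z, ?_⟩
  have := Ess.iInter (K := fun n => S n z) (M := E) (fun n => hSc n z)
    (fun m n hmn x hx => ⟨hx.1, fun i hi => hx.2 i (by omega)⟩)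
    (fun n => by
      simp only [hSz]; exact (seq n).2.mono subset_rfl subset_union_left)
  refine this.mono ?_ subset_rfl
  intro x hx
  rw [mem_iInter] at hx
  exact ⟨(hx 0).1, fun i => (hx (i + 1)).2 i (Nat.lt_succ_self i)⟩

/-! ### Zero-dimensional and countable-dimensional sets -/

/-- A zero-dimensional space, encoded as one whose topology is induced from the Cantor space. -/
def ZDim (X : Type*) [TopologicalSpace X] : Prop :=
  ∃ φ : X → Cn, Topology.IsInducing φ

lemma ZDim.of_isInducing {X Y : Type*} [TopologicalSpace X] [TopologicalSpace Y] (h : ZDim Y)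
    {f : X → Y} (hf : Topology.IsInducing f) : ZDim X :=
  let ⟨φ, hφ⟩ := h
  ⟨φ ∘ f, hφ.comp hf⟩

lemma ZDim.subset {X : Type*} [TopologicalSpace X] {A B : Set X} (h : ZDim B) (hAB : A ⊆ B) :
    ZDim A :=
  h.of_isInducing (Topology.IsEmbedding.inclusion hAB |>.isInducing)

/-- A subset of a space that is covered by countably many zero-dimensional sets. -/
def SigmaZD {X : Type*} [TopologicalSpace X] (A : Set X) : Prop :=
  ∃ Z : Set (Set X), Z.Countable ∧ (∀ B ∈ Z, ZDim B) ∧ A ⊆ ⋃₀ Z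

lemma SigmaZD.subset {X : Type*} [TopologicalSpace X] {A B : Set X} (h : SigmaZD B)
    (hAB : A ⊆ B) : SigmaZD A :=
  let ⟨Z, hc, hz, hB⟩ := h
  ⟨Z, hc, hz, hAB.trans hB⟩

lemma ZDim.sigmaZD {X : Type*} [TopologicalSpace X] {A : Set X} (h : ZDim A) : SigmaZD A :=
  ⟨{A}, countable_singleton A, by simpa using h, by simp⟩

lemma SigmaZD.iUnion {X ι : Type*} [TopologicalSpace X] [Countable ι] {A : ι → Set X}
    (h : ∀ i, SigmaZD (A i)) : SigmaZD (⋃ i, A i) := by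
  choose Z hc hz hA using h
  refine ⟨⋃ i, Z i, countable_iUnion hc, ?_, iUnion_subset fun i => (hA i).trans ?_⟩
  · intro B hB
    obtain ⟨i, hi⟩ := mem_iUnion.mp hB
    exact hz i B hi
  · exact sUnion_subset_sUnion (subset_iUnion Z i)

lemma SigmaZD.preimage {X Y : Type*} [TopologicalSpace X] [TopologicalSpace Y] {A : Set Y}
    (h : SigmaZD A) {f : X → Y} (hf : Topology.IsInducing f) : SigmaZD (f ⁻¹' A) := by
  obtain ⟨Z, hc, hz, hA⟩ := h
  refine ⟨(fun B => f ⁻¹' B) '' Z, hc.image _, ?_, ?_⟩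
  · rintro _ ⟨B, hB, rfl⟩
    refine (hz B hB).of_isInducing (f := fun x : f ⁻¹' B => (⟨f x, x.2⟩ : B)) ?_
    rw [← Topology.IsInducing.subtypeVal.of_comp_iff]
    exact hf.comp Topology.IsInducing.subtypeVal
  · intro x hx
    obtain ⟨B, hB, hxB⟩ := hA hx
    exact ⟨_, mem_image_of_mem _ hB, hxB⟩

lemma SigmaZD.image {X Y : Type*} [TopologicalSpace X] [TopologicalSpace Y] {A : Set X}
    (h : SigmaZD A) {f : X → Y} (hf : Topology.IsEmbedding f) : SigmaZD (f '' A) := by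
  obtain ⟨Z, hc, hz, hA⟩ := h
  refine ⟨(fun B => f '' B) '' Z, hc.image _, ?_, ?_⟩
  · rintro _ ⟨B, hB, rfl⟩
    refine (hz B hB).of_isInducing (f := (hf.homeomorphImage B).symm)
      (Homeomorph.isInducing _)
  · rintro _ ⟨x, hx, rfl⟩
    obtain ⟨B, hB, hxB⟩ := hA hx
    exact ⟨_, mem_image_of_mem _ hB, mem_image_of_mem f hxB⟩

/-- Separated sets in a metrizable space are separated by the sign of a continuous function. -/
lemma exists_sign_function {X : Type*} [TopologicalSpace X] [TopologicalSpace.MetrizableSpace X]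
    {U V : Set X} (h1 : Disjoint (closure U) V) (h2 : Disjoint U (closure V)) :
    ∃ ψ : X → ℝ, Continuous ψ ∧ (∀ x ∈ U, ψ x < 0) ∧ ∀ x ∈ V, 0 < ψ x := by
  let _ := TopologicalSpace.metrizableSpaceMetric X
  rcases U.eq_empty_or_nonempty with rfl | hU
  · exact ⟨fun _ => 1, continuous_const, by simp, by simp⟩
  rcases V.eq_empty_or_nonempty with rfl | hV
  · exact ⟨fun _ => -1, continuous_const, by simp, by simp⟩
  refine ⟨fun x => Metric.infDist x U - Metric.infDist x V,
    (Metric.continuous_infDist_pt U).sub (Metric.continuous_infDist_pt V), ?_, ?_⟩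
  · intro x hx
    have := (Metric.infDist_pos_iff_notMem_closure hV).mp (Set.disjoint_left.mp h2 hx)
    simp only [Metric.infDist_zero_of_mem hx]; linarith
  · intro x hx
    have := (Metric.infDist_pos_iff_notMem_closure hU).mp (Set.disjoint_right.mp h1 hx)
    simp only [Metric.infDist_zero_of_mem hx]; linarith

/-- In a zero-dimensional space disjoint closed sets are separated by a clopen set. -/
lemma ZDim.exists_clopen {X : Type*} [TopologicalSpace X] (h : ZDim X) {A B : Set X}
    (hA : IsClosed A) (hB : IsClosed B) (hAB : Disjoint A B) :
    ∃ C : Set X, IsClopen C ∧ A ⊆ C ∧ Disjoint C B := by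
  classical
  obtain ⟨φ, hφ⟩ := h
  set Q : Cn → ℕ → Set X := fun y n => φ ⁻¹' PiNat.cylinder y n with hQ
  have hex : ∀ z : X, ∃ n, Disjoint (Q (φ z) n) A ∨ Disjoint (Q (φ z) n) B := by
    have aux : ∀ (z : X) (D : Set X), IsClosed D → z ∉ D → ∃ n, Disjoint (Q (φ z) n) D := by
      intro z D hD hz
      obtain ⟨O, hO, hOD⟩ := hφ.isOpen_iff.mp hD.isOpen_compl
      have hzO : φ z ∈ O := by
        have : z ∈ φ ⁻¹' O := by rw [hOD]; exact hz
        exact this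
      obtain ⟨_, ⟨y, n, rfl⟩, hy, hyO⟩ :=
        (PiNat.isTopologicalBasis_cylinders (fun _ : ℕ => Bool)).exists_subset_of_mem_open hzO hO
      refine ⟨n, ?_⟩
      rw [PiNat.mem_cylinder_iff_eq] at hy
      rw [Set.disjoint_left]
      intro w hw hwD
      simp only [hQ, mem_preimage, hy] at hw
      have : w ∈ φ ⁻¹' O := hyO hw
      rw [hOD] at this
      exact this hwD
    intro z
    by_cases hz : z ∈ A
    · obtain ⟨n, hn⟩ := aux z B hB (Set.disjoint_left.mp hAB hz)
      exact ⟨n, Or.inr hn⟩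
    · obtain ⟨n, hn⟩ := aux z A hA hz
      exact ⟨n, Or.inl hn⟩
  -- The cylinder of the least length missing `A` or `B` depends locally constantly on the point.
  set N : X → ℕ := fun z => Nat.find (hex z) with hN
  have hself : ∀ z n, z ∈ Q (φ z) n := fun z n => PiNat.self_mem_cylinder _ _
  have hloc : ∀ z w, w ∈ Q (φ z) (N z) → Q (φ w) (N w) = Q (φ z) (N z) := by
    intro z w hw
    have hle : ∀ k ≤ N z, Q (φ w) k = Q (φ z) k := by
      intro k hk
      have : φ w ∈ PiNat.cylinder (φ z) k := PiNat.cylinder_anti _ hk hw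
      simp only [hQ]
      rw [PiNat.mem_cylinder_iff_eq.mp this]
    have hNN : N w = N z := by
      rw [hN]
      simp only
      rw [Nat.find_eq_iff]
      constructor
      · rw [hle _ le_rfl]; exact Nat.find_spec (hex z)
      · intro k hk
        rw [hle k hk.le]; exact Nat.find_min (hex z) hk
    rw [hNN, hle _ le_rfl]
  have hop : ∀ z, IsOpen (Q (φ z) (N z)) := fun z =>
    (PiNat.isOpen_cylinder (fun _ : ℕ => Bool) _ _).preimage hφ.continuous
  refine ⟨{z | Disjoint (Q (φ z) (N z)) B}, ⟨⟨?_⟩, ?_⟩, ?_, ?_⟩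
  · rw [isOpen_iff_forall_mem_open]
    intro z hz
    refine ⟨_, fun w hw => ?_, hop z, hself z _⟩
    simp only [mem_compl_iff, mem_ofPred_eq] at hz ⊢
    rwa [hloc z w hw]
  · rw [isOpen_iff_forall_mem_open]
    intro z hz
    refine ⟨_, fun w hw => ?_, hop z, hself z _⟩
    simp only [mem_ofPred_eq] at hz ⊢
    rwa [hloc z w hw]
  · intro z hz
    rcases Nat.find_spec (hex z) with h | h
    · exact absurd hz (Set.disjoint_left.mp h (hself z _))
    · exact h
  · rw [Set.disjoint_left]
    intro z hz
    exact Set.disjoint_left.mp hz (hself z _)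

/-- Opposite faces of the Hilbert cube are separated by a partition missing a given
zero-dimensional set. -/
lemma ZDim.exists_separator {Z : Set HC} (h : ZDim Z) (μ : ℕ) :
    ∃ g : HC → ℝ, Adm1 μ g ∧ ∀ x ∈ Z, g x ≠ 0 := by
  have hcoord : Continuous fun x : HC => (x μ : ℝ) := by fun_prop
  obtain ⟨C, hC, hAC, hCB⟩ := h.exists_clopen
    (A := {x : Z | ((x : HC) μ : ℝ) ≤ 1 / 3}) (B := {x : Z | (2 / 3 : ℝ) ≤ (x : HC) μ})
    (isClosed_le (hcoord.comp continuous_subtype_val) continuous_const)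
    (isClosed_le continuous_const (hcoord.comp continuous_subtype_val))
    (by
      rw [Set.disjoint_left]
      intro x h1 h2
      simp only [mem_ofPred_eq] at h1 h2
      linarith)
  set C1 : Set HC := Subtype.val '' C
  set C2 : Set HC := Subtype.val '' Cᶜ
  have hC1 : C1 ⊆ {x : HC | (x μ : ℝ) ≤ 2 / 3} := by
    rintro _ ⟨x, hx, rfl⟩
    by_contra hc
    simp only [mem_ofPred_eq, not_le] at hc
    exact Set.disjoint_left.mp hCB hx (mem_ofPred.mpr hc.le)
  have hC2 : C2 ⊆ {x : HC | (1 / 3 : ℝ) ≤ x μ} := by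
    rintro _ ⟨x, hx, rfl⟩
    by_contra hc
    simp only [mem_ofPred_eq, not_le] at hc
    exact hx (hAC (mem_ofPred.mpr hc.le))
  have hcl1 : closure C1 ⊆ {x : HC | (x μ : ℝ) ≤ 2 / 3} :=
    closure_minimal hC1 (isClosed_le hcoord continuous_const)
  have hcl2 : closure C2 ⊆ {x : HC | (1 / 3 : ℝ) ≤ x μ} :=
    closure_minimal hC2 (isClosed_le continuous_const hcoord)
  have hA : IsClosed {x : HC | x μ = 0} := isClosed_eq (by fun_prop) continuous_const
  have hB : IsClosed {x : HC | x μ = 1} := isClosed_eq (by fun_prop) continuous_const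
  have hsep : ∀ D : Set Z, IsClosed D → ∀ x : Z, (x : HC) ∈ closure (Subtype.val '' D) → x ∈ D := by
    intro D hD x hx
    rw [Topology.IsInducing.subtypeVal.isClosed_iff'] at hD
    exact hD x hx
  obtain ⟨ψ, hψ, h1, h2⟩ := exists_sign_function (U := {x : HC | x μ = 0} ∪ C1)
    (V := {x : HC | x μ = 1} ∪ C2)
    (by
      rw [closure_union, hA.closure_eq, Set.disjoint_left]
      rintro x (hx | hx) (hy | hy)
      · simp only [mem_ofPred_eq] at hx hy
        rw [hx] at hy; exact zero_ne_one hy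
      · have := hC2 hy
        simp only [mem_ofPred_eq] at hx this
        rw [hx] at this; norm_num at this
      · have := hcl1 hx
        simp only [mem_ofPred_eq] at hy this
        rw [hy] at this; norm_num at this
      · obtain ⟨y, hy, rfl⟩ := hy
        exact hy (hsep C hC.isClosed y hx))
    (by
      rw [closure_union, hB.closure_eq, Set.disjoint_left]
      rintro x (hx | hx) (hy | hy)
      · simp only [mem_ofPred_eq] at hx hy
        rw [hx] at hy; exact zero_ne_one hy
      · have := hcl2 hy
        simp only [mem_ofPred_eq] at hx this
        rw [hx] at this; norm_num at this
      · have := hC1 hx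
        simp only [mem_ofPred_eq] at hy this
        rw [hy] at this; norm_num at this
      · obtain ⟨x, hx, rfl⟩ := hx
        exact hsep Cᶜ hC.compl.isClosed x hy hx)
  refine ⟨ψ, ⟨hψ, fun x hx => (h1 x (Or.inl hx)).le, fun x hx => (h2 x (Or.inl hx)).le⟩, ?_⟩
  intro x hx
  by_cases hxC : (⟨x, hx⟩ : Z) ∈ C
  · exact (h1 x (Or.inr ⟨_, hxC, rfl⟩)).ne
  · exact ne_of_gt (h2 x (Or.inr ⟨_, hxC, rfl⟩))

/-- A subset of the Hilbert cube each of whose coordinates is constant or avoids a countable dense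
set is zero-dimensional. -/
lemma zdim_of_coords {Z : Set HC} (e : ℕ → ℕ → unitInterval)
    (h : ∀ k, (∃ c, ∀ x ∈ Z, x k = c) ∨ (DenseRange (e k) ∧ ∀ x ∈ Z, ∀ n, x k ≠ e k n)) :
    ZDim Z := by
  classical
  set φ : Z → Cn := fun x j => decide ((x : HC) j.unpair.1 < e j.unpair.1 j.unpair.2) with hφ
  refine ⟨φ, ⟨le_antisymm ?_ ?_⟩⟩
  · rw [← continuous_iff_le_induced, continuous_pi_iff]
    intro j
    set k := j.unpair.1
    set t := e j.unpair.1 j.unpair.2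
    have hco : Continuous fun x : Z => (x : HC) k :=
      (continuous_apply k).comp continuous_subtype_val
    have : IsClopen {x : Z | (x : HC) k < t} := by
      refine ⟨?_, isOpen_lt hco continuous_const⟩
      rcases h k with ⟨c, hc⟩ | ⟨_, hav⟩
      · by_cases hct : c < t
        · convert isClosed_univ
          ext x; simp [hc x x.2, hct]
        · convert isClosed_empty
          ext x; simp [hc x x.2, not_lt.mp hct]
      · convert isClosed_le hco (continuous_const (y := t)) using 1
        ext x
        exact ⟨fun h => mem_ofPred.mpr (le_of_lt h), fun h => lt_of_le_of_ne h (hav x x.2 _)⟩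
    have h2 : (fun x : Z => φ x j) = fun x => decide (x ∈ {x : Z | (x : HC) k < t}) := by
      funext x; simp [hφ, k, t]
    rw [h2]
    exact (continuous_bool_rng true).mpr (by convert this using 1; ext x; simp)
  · let tZ : TopologicalSpace Z := TopologicalSpace.induced φ inferInstance
    have hφc : Continuous φ := continuous_induced_dom
    have hbit : ∀ k n, IsClopen {x : Z | (x : HC) k < e k n} := by
      intro k n
      have h1 : Continuous fun x : Z => φ x (Nat.pair k n) := (continuous_apply _).comp hφc
      have := (continuous_bool_rng true).mp h1
      convert this using 1
      ext x; simp [hφ]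
    have hc : ∀ k, Continuous fun x : Z => (x : HC) k := by
      intro k
      rcases h k with ⟨c, hc⟩ | ⟨hd, hav⟩
      · have : (fun x : Z => (x : HC) k) = fun _ => c := by funext x; exact hc x x.2
        rw [this]; exact continuous_const
      · rw [OrderTopology.continuous_iff]
        intro a
        constructor
        · have : (fun x : Z => (x : HC) k) ⁻¹' Ioi a =
              ⋃ n, ⋃ (_ : a < e k n), {x : Z | (x : HC) k < e k n}ᶜ := by
            ext x
            simp only [mem_preimage, mem_Ioi, mem_iUnion, mem_compl_iff, mem_ofPred_eq, not_lt,
              exists_prop]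
            constructor
            · intro hx
              obtain ⟨_, ⟨n, rfl⟩, h1, h2⟩ := hd.exists_between hx
              exact ⟨n, h1, h2.le⟩
            · rintro ⟨n, h1, h2⟩; exact h1.trans_le h2
          rw [this]
          exact isOpen_iUnion fun n => isOpen_iUnion fun _ => (hbit k n).compl.isOpen
        · have : (fun x : Z => (x : HC) k) ⁻¹' Iio a =
              ⋃ n, ⋃ (_ : e k n ≤ a), {x : Z | (x : HC) k < e k n} := by
            ext x
            simp only [mem_preimage, mem_Iio, mem_iUnion, mem_ofPred_eq, exists_prop]
            constructor
            · intro hx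
              obtain ⟨_, ⟨n, rfl⟩, h1, h2⟩ := hd.exists_between hx
              exact ⟨n, h2.le, h1⟩
            · rintro ⟨n, h1, h2⟩; exact h2.trans_le h1
          rw [this]
          exact isOpen_iUnion fun n => isOpen_iUnion fun _ => (hbit k n).isOpen
    have : @Continuous Z HC tZ _ (fun x => (x : HC)) := continuous_pi hc
    exact continuous_iff_le_induced.mp this

/-- The finite-dimensional faces of the Hilbert cube have countable-dimensional union. -/
lemma sigmaZD_eventually_zero : SigmaZD {z : HC | ∃ N, ∀ i ≥ N, z i = 0} := by
  classical
  set d : ℕ → unitInterval := TopologicalSpace.denseSeq unitInterval with hd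
  -- Fix `N`, the set of coordinates lying in a countable dense set, and their values there.
  set A : (Σ N : ℕ, Fin N → Option ℕ) → Set HC := fun s =>
    {z | (∀ i ≥ s.1, z i = 0) ∧ ∀ i : Fin s.1, match s.2 i with
      | none => ∀ n, z i ≠ d n
      | some n => z i = d n} with hA
  have hz : ∀ s, SigmaZD (A s) := by
    intro s
    refine (zdim_of_coords (fun _ => d) fun k => ?_).sigmaZD
    by_cases hk : k < s.1
    · cases hs : s.2 ⟨k, hk⟩ with
      | none =>
        right
        refine ⟨TopologicalSpace.denseRange_denseSeq _, fun x hx => ?_⟩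
        have := hx.2 ⟨k, hk⟩
        rw [hs] at this
        exact this
      | some n =>
        left
        refine ⟨d n, fun x hx => ?_⟩
        have := hx.2 ⟨k, hk⟩
        rw [hs] at this
        exact this
    · left
      exact ⟨0, fun x hx => hx.1 k (not_lt.mp hk)⟩
  refine (SigmaZD.iUnion hz).subset ?_
  rintro z ⟨N, hN⟩
  rw [mem_iUnion]
  refine ⟨⟨N, fun i => if h : ∃ n, z i = d n then some h.choose else none⟩, hN, fun i => ?_⟩
  by_cases h : ∃ n, z i = d n
  · simp only [h, dite_true]
    exact h.choose_spec
  · simp only [h, dite_false]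
    push Not at h
    exact h

/-! ### Codes -/

/-- The standard embedding of the Cantor space in the unit interval. -/
noncomputable def code (s : Cn) : unitInterval :=
  ⟨(cantorSetHomeomorphNatToBool.symm s : ℝ),
    cantorSet_subset_unitInterval (cantorSetHomeomorphNatToBool.symm s).2⟩

lemma continuous_code : Continuous code := by
  unfold code
  exact Continuous.subtype_mk (continuous_subtype_val.comp (Homeomorph.continuous _)) _

lemma code_injective : Function.Injective code := by
  intro s t h
  have := congrArg Subtype.val h
  exact cantorSetHomeomorphNatToBool.symm.injective (Subtype.ext this)

lemma isClosedEmbedding_code : Topology.IsClosedEmbedding code :=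
  continuous_code.isClosedEmbedding code_injective

/-- A left inverse of `code`. -/
noncomputable def dec : unitInterval → Cn := Function.invFun code

@[simp] lemma dec_code (s : Cn) : dec (code s) = s := Function.leftInverse_invFun code_injective s

lemma code_dec {t : unitInterval} (h : t ∈ range code) : code (dec t) = t := by
  obtain ⟨s, rfl⟩ := h; simp

lemma continuousOn_dec : ContinuousOn dec (range code) := by
  rw [continuousOn_iff_continuous_domRestrict, isClosedEmbedding_code.isInducing.continuous_iff]
  have : code ∘ (range code).domRestrict dec = Subtype.val := by
    funext t; exact code_dec t.2
  rw [this]; exact continuous_subtype_val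

/-- Copies of `code`, squeezed between any two points of a dense sequence, so that the codes of a
fixed `r` form a dense set; an index whose pair of points is out of order gives `code` itself. -/
noncomputable def codeJ (j : ℕ) (r : Cn) : unitInterval :=
  let a := TopologicalSpace.denseSeq unitInterval j.unpair.1
  let b := TopologicalSpace.denseSeq unitInterval j.unpair.2
  if h : a < b then ⟨(a : ℝ) + ((b : ℝ) - a) * code r, by
    have h1 : (a : ℝ) < b := h
    have h2 := (code r).2
    have ha := a.2
    have hb := b.2
    constructor
    · have := mul_nonneg (sub_nonneg.mpr h1.le) h2.1; linarith [ha.1]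
    · nlinarith [h2.1, h2.2, hb.2]⟩
  else code r

lemma continuous_codeJ (j : ℕ) : Continuous (codeJ j) := by
  unfold codeJ
  have := continuous_code
  by_cases h : TopologicalSpace.denseSeq unitInterval j.unpair.1 <
    TopologicalSpace.denseSeq unitInterval j.unpair.2
  · simp only [h, dite_true]
    exact Continuous.subtype_mk (by fun_prop) _
  · simpa only [h, dite_false] using this

lemma codeJ_injective (j : ℕ) : Function.Injective (codeJ j) := by
  unfold codeJ
  by_cases h : TopologicalSpace.denseSeq unitInterval j.unpair.1 <
    TopologicalSpace.denseSeq unitInterval j.unpair.2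
  · simp only [h, dite_true]
    intro r s hrs
    have h1 := congrArg Subtype.val hrs
    simp only [add_right_inj] at h1
    have h2 : ((TopologicalSpace.denseSeq unitInterval j.unpair.1 : unitInterval) : ℝ) <
      TopologicalSpace.denseSeq unitInterval j.unpair.2 := h
    have h3 := mul_left_cancel₀ (sub_pos.mpr h2).ne' h1
    exact code_injective (Subtype.ext h3)
  · simpa only [h, dite_false] using code_injective

lemma isClosedEmbedding_codeJ (j : ℕ) : Topology.IsClosedEmbedding (codeJ j) :=
  (continuous_codeJ j).isClosedEmbedding (codeJ_injective j)

lemma denseRange_codeJ (r : Cn) : DenseRange (fun j => codeJ j r) := by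
  refine dense_of_exists_between fun u v huv => ?_
  obtain ⟨_, ⟨m, rfl⟩, h1, h2⟩ :=
    (TopologicalSpace.denseRange_denseSeq unitInterval).exists_between huv
  obtain ⟨_, ⟨n, rfl⟩, h3, h4⟩ :=
    (TopologicalSpace.denseRange_denseSeq unitInterval).exists_between h2
  refine ⟨_, ⟨Nat.pair m n, rfl⟩, ?_⟩
  have h3' : ((TopologicalSpace.denseSeq unitInterval m : unitInterval) : ℝ) <
      TopologicalSpace.denseSeq unitInterval n := h3
  have h5 := (code r).2
  simp only [codeJ, Nat.unpair_pair, h3, dite_true]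
  constructor
  · refine h1.trans_le ?_
    rw [← Subtype.coe_le_coe]
    have := mul_nonneg (sub_nonneg.mpr h3'.le) h5.1
    simp only; linarith
  · refine lt_of_le_of_lt ?_ h4
    rw [← Subtype.coe_le_coe]
    simp only; nlinarith [h5.1, h5.2]

lemma exists_basisH : ∃ B : ℕ → Set HC, (∀ n, IsOpen (B n)) ∧
    ∀ U : Set HC, IsOpen U → ∀ x ∈ U, ∃ n, x ∈ B n ∧ B n ⊆ U := by
  obtain ⟨b, hc, hne, hb⟩ := TopologicalSpace.exists_countable_basis HC
  have hbn : b.Nonempty := by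
    obtain ⟨t, ht, _⟩ := hb.exists_subset_of_mem_open (mem_univ (0 : HC)) isOpen_univ
    exact ⟨t, ht⟩
  obtain ⟨B, rfl⟩ := hc.exists_eq_range hbn
  refine ⟨B, fun n => hb.isOpen ⟨n, rfl⟩, fun U hU x hx => ?_⟩
  obtain ⟨_, ⟨n, rfl⟩, h1, h2⟩ := hb.exists_subset_of_mem_open hx hU
  exact ⟨n, h1, h2⟩

/-- An enumerated base of the Hilbert cube. -/
noncomputable def basisH : ℕ → Set HC := exists_basisH.choose

/-- The `e`-th open set coded by `r`. -/
def openCode (r : Cn) (e : ℕ) : Set HC := {x | ∃ n, r (Nat.pair e n) = true ∧ x ∈ basisH n}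

lemma isOpen_openCode (e : ℕ) : IsOpen {p : Cn × HC | p.2 ∈ openCode p.1 e} := by
  simp only [openCode, mem_ofPred_eq]
  have : {p : Cn × HC | ∃ n, p.1 (Nat.pair e n) = true ∧ p.2 ∈ basisH n} =
      ⋃ n, ({p : Cn × HC | p.1 (Nat.pair e n) = true} ∩ Prod.snd ⁻¹' basisH n) := by
    ext p; simp
  rw [this]
  refine isOpen_iUnion fun n => IsOpen.inter ?_ ?_
  · have hc : Continuous fun p : Cn × HC => p.1 (Nat.pair e n) := by fun_prop
    exact (isOpen_discrete {true}).preimage hc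
  · exact (exists_basisH.choose_spec.1 n).preimage continuous_snd

lemma exists_openCode (U : ℕ → Set HC) (hU : ∀ e, IsOpen (U e)) :
    ∃ r : Cn, ∀ e, openCode r e = U e := by
  classical
  refine ⟨fun k => decide (basisH k.unpair.2 ⊆ U k.unpair.1), fun e => ?_⟩
  ext x
  simp only [openCode, mem_ofPred_eq, Nat.unpair_pair, decide_eq_true_eq]
  constructor
  · rintro ⟨n, h1, h2⟩; exact h1 h2
  · intro hx
    obtain ⟨n, h1, h2⟩ := exists_basisH.choose_spec.2 _ (hU e) x hx
    exact ⟨n, h2, h1⟩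

/-! ### Measurability -/

/-- The `p`-th bit of a point of the Hilbert cube. -/
def bitSet (p : ℕ) : Set HC :=
  {x | x p.unpair.1 < TopologicalSpace.denseSeq unitInterval p.unpair.2}

lemma isOpen_bitSet (p : ℕ) : IsOpen (bitSet p) :=
  isOpen_lt (continuous_apply _) continuous_const

lemma eq_of_bitSet {x y : HC} (h : ∀ p, x ∈ bitSet p ↔ y ∈ bitSet p) : x = y := by
  have aux : ∀ x y : HC, (∀ p, x ∈ bitSet p ↔ y ∈ bitSet p) → ∀ k, y k ≤ x k := by
    intro x y h k
    by_contra hc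
    rw [not_le] at hc
    obtain ⟨_, ⟨n, rfl⟩, h1, h2⟩ :=
      (TopologicalSpace.denseRange_denseSeq unitInterval).exists_between hc
    have := (h (Nat.pair k n)).mp (by simpa [bitSet] using h1)
    simp only [bitSet, mem_ofPred_eq, Nat.unpair_pair] at this
    exact lt_asymm this h2
  funext k
  exact le_antisymm (aux y x (fun p => (h p).symm) k) (aux x y h k)

lemma measurable_to_cn {X : Type*} [MeasurableSpace X] {f : X → Cn}
    (h : ∀ n, MeasurableSet {x | f x n = true}) : Measurable f :=
  measurable_pi_iff.mpr fun n => measurable_to_bool (h n)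

lemma exists_decodeH : ∃ D : Cn → HC, Measurable D ∧
    ∀ (x : HC) (w : Cn), (∀ p, w p = true ↔ x ∈ bitSet p) → D w = x := by
  classical
  set b : HC → Cn := fun x p => decide (x ∈ bitSet p) with hb
  have hbm : Measurable b := measurable_to_cn fun n => by
    simpa [hb] using (isOpen_bitSet n).measurableSet
  have hbi : Function.Injective b := by
    intro x y hxy
    refine eq_of_bitSet fun p => ?_
    have := congrFun hxy p
    simpa [hb] using this
  obtain ⟨D, hD, hDb⟩ := (hbm.measurableEmbedding hbi).exists_measurable_extend measurable_id
    (fun _ => ⟨0⟩)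
  refine ⟨D, hD, fun x w hw => ?_⟩
  have : w = b x := by
    funext p
    rw [Bool.eq_iff_iff, hw p]; simp [hb]
  rw [this]; exact congrFun hDb x

/-- Measurable reconstruction of a point of the Hilbert cube from its bits. -/
noncomputable def decodeH : Cn → HC := exists_decodeH.choose

open Classical in
/-- The map whose graph is coded by `r`: the bits of the value at `y` are read off from the
even-numbered open sets coded by `r`. -/
noncomputable def codedMap (r : Cn) (y : HC) : HC :=
  decodeH fun p => decide (y ∈ openCode r (2 * p))

lemma measurable_codedMap : Measurable fun p : Cn × HC => codedMap p.1 p.2 := by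
  refine exists_decodeH.choose_spec.1.comp (measurable_to_cn fun n => ?_)
  simpa using (isOpen_openCode (2 * n)).measurableSet

lemma codedMap_eq {r : Cn} {x y : HC} (h : ∀ p, y ∈ openCode r (2 * p) ↔ x ∈ bitSet p) :
    codedMap r y = x :=
  exists_decodeH.choose_spec.2 _ _ fun p => by simpa using h p

/-- A continuous map from a subset of the Hilbert cube to the Cantor space is given by the signs
of continuous functions on the whole cube. -/
lemma exists_sign_extension (D : Set HC) (w : D → Cn) (hw : Continuous w) :
    ∃ ψ : ℕ → HC → ℝ, (∀ i, Continuous (ψ i)) ∧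
      ∀ (x : D) i, ψ i x ≠ 0 ∧ decide (0 < ψ i x) = w x i := by
  have hsep : ∀ C : Set D, IsClosed C → ∀ x : D, (x : HC) ∈ closure (Subtype.val '' C) → x ∈ C := by
    intro C hC x hx
    rw [Topology.IsInducing.subtypeVal.isClosed_iff'] at hC
    exact hC x hx
  have hcl : ∀ i b, IsClosed {x : D | w x i = b} := fun i b =>
    (isClosed_discrete {b}).preimage ((continuous_apply i).comp hw)
  have key : ∀ i, ∃ ψ : HC → ℝ, Continuous ψ ∧
      (∀ x ∈ Subtype.val '' {x : D | w x i = false}, ψ x < 0) ∧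
      ∀ x ∈ Subtype.val '' {x : D | w x i = true}, 0 < ψ x := by
    intro i
    refine exists_sign_function ?_ ?_
    · rw [Set.disjoint_left]
      rintro _ hx ⟨x, hx2, rfl⟩
      have := hsep _ (hcl i false) x hx
      simp only [mem_ofPred_eq] at this hx2
      rw [this] at hx2; cases hx2
    · rw [Set.disjoint_right]
      rintro _ hx ⟨x, hx2, rfl⟩
      have := hsep _ (hcl i true) x hx
      simp only [mem_ofPred_eq] at this hx2
      rw [this] at hx2; cases hx2
  choose ψ hψ h0 h1 using key
  refine ⟨ψ, hψ, fun x i => ?_⟩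
  cases hb : w x i with
  | false =>
    have := h0 i x ⟨x, hb, rfl⟩
    exact ⟨this.ne, by simpa using this.le⟩
  | true =>
    have := h1 i x ⟨x, hb, rfl⟩
    exact ⟨this.ne', by simpa using this⟩

/-! ### Traps and tasks -/

/-- The number of the open set coding the condition that bit `i` is `b`. -/
def bitIdx (i : ℕ) (b : Bool) : ℕ := 2 * (2 * i + b.toNat) + 1

/-- The points whose `k`-th coordinate is a code, of type `j`, of a partial map into the domain
of `f` that recovers the point through `f`: the odd-numbered open sets of the code `r` determine
the image `u` of the point, and the map coded by the even-numbered ones sends `f u` back to it. -/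
def trapSet (f : Cn → HC) (k j : ℕ) : Set HC :=
  {x | ∃ r u : Cn, x k = codeJ j r ∧
    (∀ i, x ∈ openCode r (bitIdx i (u i)) ∧ x ∉ openCode r (bitIdx i (!u i))) ∧
    codedMap r (f u) = x}

/-- A task consists of continuous functions `ψ i` and a map `F` from the Cantor space; it
captures the points that `F` recovers from the signs of the `ψ i`. -/
def captured (ψ : ℕ → HC → ℝ) (F : Cn → HC) : Set HC :=
  {x | (∀ i, ψ i x ≠ 0) ∧ F (fun i => decide (0 < ψ i x)) = x}

/-- A trap is captured by a task: on the trap, `r` and `u` depend continuously on the point, hence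
are given by the signs of continuous functions, and they determine the point measurably. -/
lemma trapSet_captured {f : Cn → HC} (hf : Measurable f) (k j : ℕ) :
    ∃ (ψ : ℕ → HC → ℝ) (F : Cn → HC), (∀ i, Continuous (ψ i)) ∧ Measurable F ∧
      trapSet f k j ⊆ captured ψ F := by
  set D := trapSet f k j with hD
  choose r u hr hu hv using fun x : D => x.2
  have hrc : Continuous r := by
    rw [(isClosedEmbedding_codeJ j).isInducing.continuous_iff]
    have : codeJ j ∘ r = fun x : D => (x : HC) k := by funext x; exact (hr x).symm
    rw [this]
    exact (continuous_apply k).comp continuous_subtype_val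
  have huc : Continuous u := by
    refine continuous_pi fun i => continuous_discrete_rng.mpr fun b => ?_
    have : (fun x : D => u x i) ⁻¹' {b} =
        (fun x : D => (r x, (x : HC))) ⁻¹' {p | p.2 ∈ openCode p.1 (bitIdx i b)} := by
      ext x
      simp only [mem_preimage, mem_singleton_iff, mem_ofPred_eq]
      constructor
      · rintro rfl; exact (hu x i).1
      · intro hx
        by_contra hc
        have : (!u x i) = b := by revert hc; cases u x i <;> cases b <;> simp
        exact (hu x i).2 (this ▸ hx)
    rw [this]
    exact (isOpen_openCode _).preimage (hrc.prodMk continuous_subtype_val)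
  set w : D → Cn := fun x n => if n % 2 = 0 then r x (n / 2) else u x (n / 2) with hw
  have hwc : Continuous w := by
    refine continuous_pi fun n => ?_
    simp only [hw]
    split_ifs
    · exact (continuous_apply _).comp hrc
    · exact (continuous_apply _).comp huc
  obtain ⟨ψ, hψ, hs⟩ := exists_sign_extension D w hwc
  refine ⟨ψ, fun y => codedMap (fun n => y (2 * n)) (f fun n => y (2 * n + 1)), hψ, ?_, ?_⟩
  · refine measurable_codedMap.comp (Measurable.prodMk ?_ (hf.comp ?_)) <;>
      exact measurable_pi_iff.mpr fun n => measurable_pi_apply _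
  · intro x hx
    refine ⟨fun i => (hs ⟨x, hx⟩ i).1, ?_⟩
    have h2 : (fun i => decide (0 < ψ i x)) = w ⟨x, hx⟩ := by
      funext i; exact (hs ⟨x, hx⟩ i).2
    rw [h2]
    have h3 : (fun n => w ⟨x, hx⟩ (2 * n)) = r ⟨x, hx⟩ := by
      funext n; simp [hw]
    have h4 : (fun n => w ⟨x, hx⟩ (2 * n + 1)) = u ⟨x, hx⟩ := by
      funext n
      have h5 : (2 * n + 1) % 2 = 1 := by omega
      have h6 : (2 * n + 1) / 2 = n := by omega
      simp [hw, h5, h6]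
    simp only [h3, h4]
    exact hv ⟨x, hx⟩

/-! ### Functions with `Gδ` graph and measurable selection -/

/-- Every Borel set can be read off from a bit of a function with `Gδ` graph. -/
lemma exists_gdelta_bit {B : Set Cn} (hB : MeasurableSet B) :
    ∃ Y : Cn → Cn, IsGδ {p : Cn × Cn | p.2 = Y p.1} ∧ ∀ s, Y s 0 = true ↔ s ∈ B := by
  classical
  have hbit : ∀ (n : ℕ) (b : Bool), IsClopen {p : Cn × Cn | p.2 n = b} := fun n b =>
    (isClopen_discrete {b}).preimage (f := fun p : Cn × Cn => p.2 n) (by fun_prop)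
  induction B, hB using MeasurableSet.induction_on_open with
  | isOpen U hU =>
    refine ⟨fun s _ => decide (s ∈ U), ?_, fun s => by simp⟩
    have : {p : Cn × Cn | p.2 = fun _ => decide (p.1 ∈ U)} =
        (⋂ j, {p : Cn × Cn | p.2 j = p.2 0}) ∩ (({p | p.2 0 = true} ∩ Prod.fst ⁻¹' U) ∪
          ({p | p.2 0 = false} ∩ Prod.fst ⁻¹' Uᶜ)) := by
      ext ⟨s, y⟩
      simp only [mem_ofPred_eq, mem_inter_iff, mem_iInter, mem_union, mem_preimage, mem_compl_iff]
      constructor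
      · intro h
        have hj : ∀ j, y j = decide (s ∈ U) := fun j => congrFun h j
        by_cases h : s ∈ U <;> simp [h, hj]
      · rintro ⟨h1, ⟨h2, h3⟩ | ⟨h2, h3⟩⟩ <;> funext j <;> simp [h1 j, h2, h3]
    rw [this]
    refine IsGδ.inter (isClosed_iInter fun j => isClosed_eq (by fun_prop) (by fun_prop)).isGδ ?_
    refine IsGδ.union (IsOpen.isGδ ?_) (IsClosed.isGδ ?_)
    · exact (hbit 0 true).isOpen.inter (hU.preimage continuous_fst)
    · exact (hbit 0 false).isClosed.inter (hU.isClosed_compl.preimage continuous_fst)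
  | compl B hB ih =>
    obtain ⟨Y, hY, h⟩ := ih
    refine ⟨fun s => Function.update (Y s) 0 (!Y s 0), ?_, fun s => ?_⟩
    · have hc : Continuous fun p : Cn × Cn => (p.1, Function.update p.2 0 (!p.2 0)) := by
        refine continuous_fst.prodMk (continuous_snd.update 0 ?_)
        exact (continuous_of_discreteTopology (f := Bool.not)).comp
          ((continuous_apply 0).comp continuous_snd)
      convert hY.preimage hc using 1
      ext ⟨s, y⟩
      simp only [mem_ofPred_eq, mem_preimage]
      constructor
      · rintro rfl; simp
      · intro h2; rw [← h2]; simp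
    · have := h s
      simp only [Function.update_self, mem_compl_iff, ← this]; simp
  | iUnion f _ hf ih =>
    choose Y hY h using ih
    set Y' : Cn → Cn := fun s n => match n with
      | 0 => decide (∃ i, Y i s 0 = true)
      | n + 1 => Y n.unpair.1 s n.unpair.2 with hY'
    refine ⟨Y', ?_, fun s => ?_⟩
    · have : {p : Cn × Cn | p.2 = Y' p.1} =
          (⋂ i, {p : Cn × Cn | (fun j => p.2 (Nat.pair i j + 1)) = Y i p.1}) ∩
          (({p | p.2 0 = true} ∩ ⋃ i, {p | p.2 (Nat.pair i 0 + 1) = true}) ∪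
          ({p | p.2 0 = false} ∩ ⋂ i, {p | p.2 (Nat.pair i 0 + 1) = false})) := by
        ext ⟨s, y⟩
        simp only [mem_ofPred_eq, mem_inter_iff, mem_iInter, mem_union, mem_iUnion]
        constructor
        · rintro rfl
          refine ⟨fun i => by funext j; simp [hY'], ?_⟩
          by_cases h : ∃ i, Y i s 0 = true
          · left; simpa [hY'] using h
          · right; simpa [hY'] using h
        · rintro ⟨h1, h2⟩
          have h1' : ∀ i j, y (Nat.pair i j + 1) = Y i s j := fun i j => congrFun (h1 i) j
          funext n
          cases n with
          | zero =>
            simp only [h1'] at h2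
            rcases h2 with ⟨h2, h3⟩ | ⟨h2, h3⟩ <;> simp [hY', h2, h3]
          | succ n =>
            have := h1' n.unpair.1 n.unpair.2
            simpa [hY'] using this
      rw [this]
      refine IsGδ.inter (IsGδ.iInter fun i => ?_) (IsGδ.union (IsOpen.isGδ ?_) (IsClosed.isGδ ?_))
      · exact (hY i).preimage (f := fun p : Cn × Cn => (p.1, fun j => p.2 (Nat.pair i j + 1)))
          (by fun_prop)
      · exact (hbit 0 true).isOpen.inter (isOpen_iUnion fun i => (hbit _ true).isOpen)
      · exact (hbit 0 false).isClosed.inter (isClosed_iInter fun i => (hbit _ false).isClosed)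
    · rw [hY']
      simp [h]

/-- Every Borel map of the Cantor space to itself is part of a map with `Gδ` graph. -/
lemma exists_gdelta_graph {G : Cn → Cn} (hG : Measurable G) :
    ∃ Y : Cn → Cn, IsGδ {p : Cn × Cn | p.2 = Y p.1} ∧ ∀ s n, Y s (Nat.pair n 0) = G s n := by
  have : ∀ n, ∃ Y : Cn → Cn, IsGδ {p : Cn × Cn | p.2 = Y p.1} ∧
      ∀ s, Y s 0 = true ↔ s ∈ {s | G s n = true} := fun n =>
    exists_gdelta_bit ((measurable_pi_apply n).comp hG (measurableSet_singleton true))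
  choose Y hY h using this
  refine ⟨fun s k => Y k.unpair.1 s k.unpair.2, ?_, fun s n => ?_⟩
  · have : {p : Cn × Cn | p.2 = fun k => Y k.unpair.1 p.1 k.unpair.2} =
        ⋂ i, {p : Cn × Cn | (fun j => p.2 (Nat.pair i j)) = Y i p.1} := by
      ext ⟨s, y⟩
      simp only [mem_ofPred_eq, mem_iInter]
      constructor
      · rintro rfl i; funext j; simp
      · intro h1; funext k
        have := congrFun (h1 k.unpair.1) k.unpair.2
        simpa using this
    rw [this]
    exact IsGδ.iInter fun i => (hY i).preimage
      (f := fun p : Cn × Cn => (p.1, fun j => p.2 (Nat.pair i j))) (by fun_prop)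
  · simp only [Nat.unpair_pair]
    rw [Bool.eq_iff_iff, h n s]; rfl

/-- Measurable selection from closed relations on the Cantor space, by minimising the code. -/
lemma exists_measurable_selection {R : Set (Cn × Cn)} (hR : IsClosed R) :
    ∃ z : Cn → Cn, Measurable z ∧ ∀ s t, (s, t) ∈ R → (s, z s) ∈ R := by
  classical
  have hex : ∀ s, ∃ z, (∃ t, (s, t) ∈ R) → (s, z) ∈ R ∧ ∀ t, (s, t) ∈ R → code z ≤ code t := by
    intro s
    by_cases h : ∃ t, (s, t) ∈ R
    · have hc : IsCompact {t | (s, t) ∈ R} :=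
        (hR.preimage (f := fun t : Cn => (s, t)) (by fun_prop)).isCompact
      obtain ⟨z, hz, hm⟩ := hc.exists_isMinOn h continuous_code.continuousOn
      exact ⟨z, fun _ => ⟨hz, fun t ht => hm ht⟩⟩
    · exact ⟨fun _ => false, fun h' => absurd h' h⟩
  choose z₀ hz₀ using hex
  have hproj : ∀ S : Set (Cn × Cn), IsClosed S → IsClosed {s : Cn | ∃ t, (s, t) ∈ S} := by
    intro S hS
    convert isClosedMap_fst_of_compactSpace _ hS using 1
    ext s; simp
  set d : Cn := fun _ => false
  set z : Cn → Cn := fun s => if ∃ t, (s, t) ∈ R then z₀ s else d with hz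
  refine ⟨z, ?_, fun s t hst => ?_⟩
  · rw [← isClosedEmbedding_code.measurableEmbedding.measurable_comp_iff]
    refine measurable_of_Iic fun a => ?_
    have : (code ∘ z) ⁻¹' Iic a = {s | ∃ t, (s, t) ∈ R ∩ {p | code p.2 ≤ a}} ∪
        ({s | ∃ t, (s, t) ∈ R}ᶜ ∩ {_s | code d ≤ a}) := by
      ext s
      simp only [mem_preimage, Function.comp, mem_Iic, mem_union, mem_ofPred_eq, mem_inter_iff,
        mem_compl_iff]
      by_cases h : ∃ t, (s, t) ∈ R
      · simp only [hz, h, if_true, not_true, false_and, or_false]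
        constructor
        · intro h1; exact ⟨z₀ s, (hz₀ s h).1, h1⟩
        · rintro ⟨t, ht, hta⟩; exact ((hz₀ s h).2 t ht).trans hta
      · simp only [hz, h, if_false, not_false_eq_true, true_and]
        refine ⟨Or.inr, ?_⟩
        rintro (⟨t, ht, _⟩ | h1)
        · exact absurd ⟨t, ht⟩ h
        · exact h1
    rw [this]
    refine MeasurableSet.union (IsClosed.measurableSet (hproj _ (hR.inter ?_)))
      ((hproj _ hR).measurableSet.compl.inter (MeasurableSet.const _))
    exact isClosed_le (continuous_code.comp continuous_snd) continuous_const
  · have h : ∃ t, (s, t) ∈ R := ⟨t, hst⟩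
    simp only [hz, h, if_true]
    exact (hz₀ s h).1

/-! ### The space attached to a sequence of tasks -/

/-- A sequence of tasks, each of which is as in `captured`. -/
structure Tasks where
  /-- The functions whose signs are read. -/
  ψ : ℕ → ℕ → HC → ℝ
  /-- The maps that predict a point from its signs. -/
  F : ℕ → Cn → HC
  cont : ∀ m i, Continuous (ψ m i)
  meas : ∀ m, Measurable (F m)

/-- The coordinates still free after the choices recorded in the list (latest choice first).
Position `0` is used for coding, position `1` for avoiding a zero-dimensional set, and the
positions `pair a i + 2` are reserved for the branch `a`; the first of those carries a cue. -/
def free : List ℕ → ℕ → ℕ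
  | [] => id
  | a :: l => fun i => free l (Nat.pair a (i + 1) + 2)

lemma free_injective : ∀ l, Function.Injective (free l)
  | [] => Function.injective_id
  | a :: l => by
    intro i j h
    have h1 := free_injective l h
    have h2 : Nat.pair a (i + 1) = Nat.pair a (j + 1) := by omega
    have := (Nat.pair_eq_pair.mp h2).2
    omega

/-- The coordinates reserved for the branch `a`. -/
def branchDirs (l : List ℕ) (a : ℕ) : Set ℕ := range fun i => free l (Nat.pair a i + 2)

/-- The coordinate carrying the cue for the branch `a`. -/
def cueDir (l : List ℕ) (a : ℕ) : ℕ := free l (Nat.pair a 0 + 2)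

/-- The previous state stored in a state. -/
def prevSt (s : Cn) : Cn := fun j => s (Nat.pair (Nat.pair 0 j) 0)

/-- The sign sequence stored in a state. -/
def signSt (s : Cn) : Cn := fun j => s (Nat.pair (Nat.pair 1 j) 0)

/-- The cue stored in a state. -/
def cueSt (s : Cn) : Bool := s (Nat.pair (Nat.pair 2 0) 0)

lemma continuous_prevSt : Continuous prevSt := continuous_pi fun _ => continuous_apply _

lemma continuous_signSt : Continuous signSt := continuous_pi fun _ => continuous_apply _

lemma continuous_cueSt : Continuous cueSt := continuous_apply _

/-- The position of the point on the cue coordinate: `1/3` or `2/3`. -/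
noncomputable def cueVal (b : Bool) : unitInterval :=
  if b then ⟨1 / 3, by norm_num, by norm_num⟩ else ⟨2 / 3, by norm_num, by norm_num⟩

/-- The conditions imposed at a node: the coordinate at position `0` codes the state, and the point
lies on the partition in the direction at position `1` that is recorded in the initial state. -/
noncomputable def nodeCond (l : List ℕ) : Set (Cn × HC) :=
  {p | p.2 (free l 0) = code p.1 ∧
    p.2 ∉ openCode (prevSt^[l.length] p.1) (Nat.pair l.length (free l 1))}

lemma isClosed_nodeCond (l : List ℕ) : IsClosed (nodeCond l) := by
  refine IsClosed.inter (isClosed_eq (by fun_prop) (continuous_code.comp continuous_fst)) ?_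
  have : Continuous fun p : Cn × HC => (prevSt^[l.length] p.1, p.2) :=
    ((continuous_prevSt.iterate _).comp continuous_fst).prodMk continuous_snd
  exact ((isOpen_openCode (Nat.pair l.length (free l 1))).preimage this).isClosed_compl

namespace Tasks

variable (τ : Tasks)

/-- The two kinds of outcome of a task: a full sign sequence, or a zero of one function. -/
def outcome (m : ℕ) : ℕ → Cn → Set HC
  | 0, z => signSet (τ.ψ m) z
  | i + 1, _ => {x | τ.ψ m i x = 0}

lemma isClosed_outcome (m a : ℕ) : IsClosed {p : Cn × HC | p.2 ∈ τ.outcome m a p.1} := by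
  cases a with
  | zero =>
    have he : {p : Cn × HC | p.2 ∈ τ.outcome m 0 p.1} =
        ⋂ i, {p : Cn × HC | if p.1 i then 0 ≤ τ.ψ m i p.2 else τ.ψ m i p.2 ≤ 0} := by
      ext p; simp [outcome, signSet]
    rw [he]
    refine isClosed_iInter fun i => ?_
    have hc : Continuous fun p : Cn × HC => τ.ψ m i p.2 := (τ.cont m i).comp continuous_snd
    have hb : ∀ b : Bool, IsClosed {p : Cn × HC | p.1 i = b} := fun b =>
      (isClosed_discrete {b}).preimage (f := fun p : Cn × HC => p.1 i) (by fun_prop)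
    convert ((hb true).inter (isClosed_le (continuous_const (y := (0 : ℝ))) hc)).union
      ((hb false).inter (isClosed_le hc (continuous_const (y := (0 : ℝ))))) using 1
    ext p
    cases h : p.1 i <;> simp [h]
  | succ i =>
    exact isClosed_eq ((τ.cont m i).comp continuous_snd) continuous_const

/-- Passing from a node to its child `a`: the new state stores the old one, a sign sequence for the
outcome of the task, and the cue. -/
noncomputable def extend (l : List ℕ) (a : ℕ) (S : Set (Cn × HC)) : Set (Cn × HC) :=
  {p | (prevSt p.1, p.2) ∈ S ∧ p.2 ∈ τ.outcome l.length a (signSt p.1) ∧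
    p.2 (cueDir l a) = cueVal (cueSt p.1)}

lemma isClosed_extend (l : List ℕ) (a : ℕ) {S : Set (Cn × HC)} (hS : IsClosed S) :
    IsClosed (τ.extend l a S) := by
  refine IsClosed.inter ?_ (IsClosed.inter ?_ ?_)
  · exact hS.preimage ((continuous_prevSt.comp continuous_fst).prodMk continuous_snd)
  · exact (τ.isClosed_outcome l.length a).preimage
      ((continuous_signSt.comp continuous_fst).prodMk continuous_snd)
  · refine isClosed_eq (by fun_prop) ?_
    exact (continuous_of_discreteTopology (f := cueVal)).comp
      (continuous_cueSt.comp continuous_fst)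

/-- The closed relation between states and points at a node, all conditions at the node
included. -/
noncomputable def node : List ℕ → Set (Cn × HC)
  | [] => nodeCond []
  | a :: l => τ.extend l a (node l) ∩ nodeCond (a :: l)

lemma isClosed_node : ∀ l, IsClosed (τ.node l)
  | [] => isClosed_nodeCond []
  | a :: l => (τ.isClosed_extend l a (isClosed_node l)).inter (isClosed_nodeCond _)

lemma node_subset_nodeCond : ∀ l, τ.node l ⊆ nodeCond l
  | [] => subset_rfl
  | _ :: _ => inter_subset_right

/-- The points related to the state `s` at a node. -/
def slice (l : List ℕ) (s : Cn) : Set HC := {x | (s, x) ∈ τ.node l}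

lemma isClosed_slice (l : List ℕ) (s : Cn) : IsClosed (τ.slice l s) :=
  (τ.isClosed_node l).preimage (f := fun x : HC => (s, x)) (by fun_prop)

/-- The sign sequences for which the branch `a` may be taken. -/
def branchRel (l : List ℕ) (a : ℕ) : Set (Cn × Cn) :=
  {p | Ess (τ.slice l p.1 ∩ τ.outcome l.length a p.2) (branchDirs l a)}

lemma isClosed_branchRel (l : List ℕ) (a : ℕ) : IsClosed (τ.branchRel l a) := by
  have h : IsClosed {q : (Cn × Cn) × HC | (q.1.1, q.2) ∈ τ.node l ∧
      q.2 ∈ τ.outcome l.length a q.1.2} :=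
    ((τ.isClosed_node l).preimage (f := fun q : (Cn × Cn) × HC => (q.1.1, q.2))
      (by fun_prop)).inter
    ((τ.isClosed_outcome l.length a).preimage (f := fun q : (Cn × Cn) × HC => (q.1.2, q.2))
      (by fun_prop))
  exact isClosed_setOf_ess h (branchDirs l a)

/-- The states at which the branch `a` may be taken. -/
def branchSet (l : List ℕ) (a : ℕ) : Set Cn := {s | ∃ z, (s, z) ∈ τ.branchRel l a}

lemma isClosed_branchSet (l : List ℕ) (a : ℕ) : IsClosed (τ.branchSet l a) := by
  convert isClosedMap_fst_of_compactSpace _ (τ.isClosed_branchRel l a) using 1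
  ext s; simp [branchSet]

/-- A measurable choice of the sign sequence. -/
noncomputable def pick (l : List ℕ) (a : ℕ) : Cn → Cn :=
  (exists_measurable_selection (τ.isClosed_branchRel l a)).choose

lemma measurable_pick (l : List ℕ) (a : ℕ) : Measurable (τ.pick l a) :=
  (exists_measurable_selection (τ.isClosed_branchRel l a)).choose_spec.1

lemma pick_mem {l : List ℕ} {a : ℕ} {s : Cn} (h : s ∈ τ.branchSet l a) :
    (s, τ.pick l a s) ∈ τ.branchRel l a :=
  (exists_measurable_selection (τ.isClosed_branchRel l a)).choose_spec.2 s _ h.choose_spec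

open Classical in
/-- The information to be stored in the next state: the present state, the chosen sign sequence,
and the cue, which is chosen to contradict the prediction of the task. -/
noncomputable def payload (l : List ℕ) (a : ℕ) (s : Cn) : Cn := fun k =>
  if k.unpair.1 = 0 then s k.unpair.2
  else if k.unpair.1 = 1 then τ.pick l a s k.unpair.2
  else decide ((1 / 2 : ℝ) ≤ τ.F l.length (τ.pick l a s) (cueDir l a))

lemma measurable_payload (l : List ℕ) (a : ℕ) : Measurable (τ.payload l a) := by
  have hk : ∀ k : ℕ, MeasurableSet {s : Cn | s k = true} := fun k =>
    ((isClosed_discrete {true}).preimage (f := fun s : Cn => s k) (by fun_prop)).measurableSet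
  refine measurable_to_cn fun k => ?_
  unfold payload
  split_ifs with h1 h2
  · exact (hk k.unpair.2)
  · exact τ.measurable_pick l a (hk k.unpair.2)
  · simp only [decide_eq_true_eq]
    have : Measurable fun s => ((τ.F l.length (τ.pick l a s) (cueDir l a) : unitInterval) : ℝ) :=
      measurable_subtype_coe.comp ((measurable_pi_apply _).comp
        ((τ.meas _).comp (τ.measurable_pick l a)))
    exact this measurableSet_Ici

/-- The next state; besides the payload it holds bits which make the graph of this map `Gδ`. -/
noncomputable def next (l : List ℕ) (a : ℕ) : Cn → Cn :=
  (exists_gdelta_graph (τ.measurable_payload l a)).choose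

lemma isGδ_next (l : List ℕ) (a : ℕ) : IsGδ {p : Cn × Cn | p.2 = τ.next l a p.1} :=
  (exists_gdelta_graph (τ.measurable_payload l a)).choose_spec.1

lemma next_pair (l : List ℕ) (a : ℕ) (s : Cn) (n : ℕ) :
    τ.next l a s (Nat.pair n 0) = τ.payload l a s n :=
  (exists_gdelta_graph (τ.measurable_payload l a)).choose_spec.2 s n

@[simp] lemma prevSt_next (l : List ℕ) (a : ℕ) (s : Cn) : prevSt (τ.next l a s) = s := by
  funext j; simp [prevSt, next_pair, payload]

@[simp] lemma signSt_next (l : List ℕ) (a : ℕ) (s : Cn) :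
    signSt (τ.next l a s) = τ.pick l a s := by
  funext j; simp [signSt, next_pair, payload]

lemma cueSt_next (l : List ℕ) (a : ℕ) (s : Cn) :
    cueSt (τ.next l a s) = true ↔
      (1 / 2 : ℝ) ≤ τ.F l.length (τ.pick l a s) (cueDir l a) := by
  simp [cueSt, next_pair, payload]

/-- The points whose state at the node `l` selects the branch `a`: the first available one. -/
def chooses (l : List ℕ) (a : ℕ) : Set HC :=
  {x | x (free l 0) ∈ code '' τ.branchSet l a ∧ ∀ b < a, x (free l 0) ∉ code '' τ.branchSet l b}

/-- The points that follow the path `l`. -/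
def follows : List ℕ → Set HC
  | [] => univ
  | a :: l => follows l ∩ τ.chooses l a

/-- The points related to their own state at the node `l`, in a slice which is essential in the
remaining directions. -/
def onNode (l : List ℕ) : Set HC :=
  {x | ∃ s, x (free l 0) = code s ∧ (s, x) ∈ τ.node l ∧
    Ess (τ.slice l s) (range fun i => free l (i + 2))}

/-- The points whose next state is the prescribed one. -/
def linked (l : List ℕ) (a : ℕ) : Set HC :=
  {x | ∃ s, x (free l 0) = code s ∧ x (free (a :: l) 0) = code (τ.next l a s)}

/-- The space attached to a sequence of tasks. -/
def space : Set HC :=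
  {x | (∀ l, x ∈ τ.follows l → x ∈ τ.onNode l) ∧
    ∀ l a, x ∈ τ.follows (a :: l) → x ∈ τ.linked l a}

lemma isGδ_compl_chooses (l : List ℕ) (a : ℕ) : IsGδ (τ.chooses l a)ᶜ := by
  have hc : ∀ b, IsClosed {x : HC | x (free l 0) ∈ code '' τ.branchSet l b} := fun b =>
    (isClosedEmbedding_code.isClosedMap _ (τ.isClosed_branchSet l b)).preimage
      (f := fun x : HC => x (free l 0)) (by fun_prop)
  have : (τ.chooses l a)ᶜ = {x : HC | x (free l 0) ∈ code '' τ.branchSet l a}ᶜ ∪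
      ⋃ b ∈ Finset.range a, {x : HC | x (free l 0) ∈ code '' τ.branchSet l b} := by
    ext x
    simp only [chooses, mem_compl_iff, mem_ofPred_eq, mem_union, mem_iUnion, Finset.mem_range,
      exists_prop]
    constructor
    · intro h
      by_cases h1 : x (free l 0) ∈ code '' τ.branchSet l a
      · right
        by_contra h2
        push Not at h2
        exact h ⟨h1, h2⟩
      · exact Or.inl h1
    · rintro (h | ⟨b, hb, h⟩) ⟨h1, h2⟩
      · exact h h1
      · exact h2 b hb h
  rw [this]
  exact (hc a).isOpen_compl.isGδ.union
    (isClosed_biUnion_finset fun b _ => hc b).isGδ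

lemma isGδ_compl_follows : ∀ l, IsGδ (τ.follows l)ᶜ
  | [] => by simp [follows]
  | a :: l => by
    rw [follows, compl_inter]
    exact (isGδ_compl_follows l).union (τ.isGδ_compl_chooses l a)

lemma isClosed_onNode (l : List ℕ) : IsClosed (τ.onNode l) := by
  have h : IsClosed {p : Cn × HC | p.2 (free l 0) = code p.1 ∧ (p.1, p.2) ∈ τ.node l ∧
      Ess (τ.slice l p.1) (range fun i => free l (i + 2))} := by
    refine IsClosed.inter (isClosed_eq (by fun_prop) (continuous_code.comp continuous_fst))
      (IsClosed.inter (τ.isClosed_node l) ?_)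
    exact (isClosed_setOf_ess (τ.isClosed_node l) _).preimage continuous_fst
  convert isClosedMap_snd_of_compactSpace _ h using 1
  ext x; simp [onNode]

end Tasks

lemma isGδ_image_of_isClosedEmbedding {X Y : Type*} [TopologicalSpace X] [TopologicalSpace Y]
    [TopologicalSpace.PseudoMetrizableSpace Y] {f : X → Y} (hf : Topology.IsClosedEmbedding f)
    {A : Set X} (hA : IsGδ A) : IsGδ (f '' A) := by
  obtain ⟨T, hT, hc, rfl⟩ := hA
  have : f '' ⋂₀ T = range f ∩ ⋂ t ∈ T, (f '' tᶜ)ᶜ := by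
    ext y
    simp only [mem_inter_iff, mem_iInter, mem_compl_iff]
    constructor
    · rintro ⟨x, hx, rfl⟩
      refine ⟨⟨x, rfl⟩, ?_⟩
      rintro t ht ⟨x', hx', he⟩
      rw [hf.injective he] at hx'
      exact hx' (hx t ht)
    · rintro ⟨⟨x, rfl⟩, h⟩
      refine ⟨x, fun t ht => ?_, rfl⟩
      by_contra hx
      exact h t ht ⟨x, hx, rfl⟩
  rw [this]
  refine hf.isClosed_range.isGδ.inter (IsGδ.biInter hc fun t ht => ?_)
  exact (hf.isClosedMap _ (hT t ht).isClosed_compl).isOpen_compl.isGδ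

namespace Tasks

variable (τ : Tasks)

lemma isGδ_linked (l : List ℕ) (a : ℕ) : IsGδ (τ.linked l a) := by
  have h1 : Topology.IsClosedEmbedding (Prod.map code code) :=
    (continuous_code.prodMap continuous_code).isClosedEmbedding
      (code_injective.prodMap code_injective)
  have h2 := (isGδ_image_of_isClosedEmbedding h1 (τ.isGδ_next l a)).preimage
    (f := fun x : HC => (x (free l 0), x (free (a :: l) 0))) (by fun_prop)
  convert h2 using 1
  ext x
  simp only [linked, mem_ofPred_eq, mem_preimage, mem_image, Prod.exists, Prod.map_apply,
    Prod.mk.injEq]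
  constructor
  · rintro ⟨s, h1, h2⟩; exact ⟨s, _, rfl, h1.symm, h2.symm⟩
  · rintro ⟨s, _, rfl, h1, h2⟩; exact ⟨s, h1.symm, h2.symm⟩

lemma isGδ_space : IsGδ τ.space := by
  have : τ.space = (⋂ l, ((τ.follows l)ᶜ ∪ τ.onNode l)) ∩
      ⋂ l, ⋂ a, ((τ.follows (a :: l))ᶜ ∪ τ.linked l a) := by
    ext x
    simp only [space, mem_ofPred_eq, mem_inter_iff, mem_iInter, mem_union, mem_compl_iff,
      imp_iff_not_or]
  rw [this]
  refine IsGδ.inter (IsGδ.iInter fun l => ?_) (IsGδ.iInter fun l => IsGδ.iInter fun a => ?_)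
  · exact (τ.isGδ_compl_follows l).union (τ.isClosed_onNode l).isGδ
  · exact (τ.isGδ_compl_follows _).union (τ.isGδ_linked l a)

/-- Some branch is available at every essential slice, by `ess_dichotomy`. -/
lemma exists_branch {l : List ℕ} {s : Cn}
    (h : Ess (τ.slice l s) (range fun i => free l (i + 2))) : ∃ a, s ∈ τ.branchSet l a := by
  have hdis : ∀ a b, a ≠ b → Disjoint (branchDirs l a) (branchDirs l b) := by
    intro a b hab
    rw [Set.disjoint_left]
    rintro _ ⟨i, rfl⟩ ⟨j, hj⟩
    have h1 : Nat.pair b j = Nat.pair a i := by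
      have := free_injective l hj
      omega
    exact hab (Nat.pair_eq_pair.mp h1).1.symm
  rcases ess_dichotomy (τ.isClosed_slice l s) (τ.cont l.length) (E := branchDirs l 0)
    (W := fun i => branchDirs l (i + 1)) (fun i => hdis _ _ (by omega))
    (fun i j hij => hdis _ _ (by omega)) (h.mono subset_rfl (by
      rintro k (⟨i, rfl⟩ | hk)
      · exact ⟨_, rfl⟩
      · obtain ⟨j, i, rfl⟩ := mem_iUnion.mp hk
        exact ⟨_, rfl⟩)) with ⟨z, hz⟩ | ⟨i, hi⟩
  · exact ⟨0, z, hz⟩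
  · exact ⟨i + 1, fun _ => false, hi⟩

lemma exists_chooses {l : List ℕ} {x : HC} (h : x ∈ τ.onNode l) : ∃ a, x ∈ τ.chooses l a := by
  classical
  obtain ⟨s, hs, _, he⟩ := h
  have hex := τ.exists_branch he
  refine ⟨Nat.find hex, ?_, fun b hb => ?_⟩
  · rw [hs]; exact mem_image_of_mem _ (Nat.find_spec hex)
  · rw [hs]
    rintro ⟨s', hs', he'⟩
    rw [code_injective he'] at hs'
    exact Nat.find_min hex hb hs'

lemma chooses_unique {l : List ℕ} {x : HC} {a b : ℕ} (ha : x ∈ τ.chooses l a)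
    (hb : x ∈ τ.chooses l b) : a = b := by
  rcases lt_trichotomy a b with h | h | h
  · exact absurd ha.1 (hb.2 a h)
  · exact h
  · exact absurd hb.1 (ha.2 b h)

lemma follows_unique {x : HC} : ∀ {l l' : List ℕ}, l.length = l'.length → x ∈ τ.follows l →
    x ∈ τ.follows l' → l = l'
  | [], [], _, _, _ => rfl
  | a :: l, b :: l', h, h1, h2 => by
    have : l = l' := follows_unique (by simpa using h) h1.1 h2.1
    subst this
    rw [τ.chooses_unique h1.2 h2.2]

/-- Points of the space with the same first coordinate follow the same path. -/
lemma exists_common_path {x y : HC} (hx : x ∈ τ.space) (hy : y ∈ τ.space) (h0 : x 0 = y 0)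
    (m : ℕ) : ∃ l : List ℕ, l.length = m ∧ x ∈ τ.follows l ∧ y ∈ τ.follows l ∧
      x (free l 0) = y (free l 0) := by
  induction m with
  | zero => exact ⟨[], rfl, mem_univ _, mem_univ _, h0⟩
  | succ m ih =>
    obtain ⟨l, hl, hxl, hyl, hxy⟩ := ih
    obtain ⟨a, ha⟩ := τ.exists_chooses (hx.1 l hxl)
    have ha' : y ∈ τ.chooses l a := by
      simp only [chooses, mem_ofPred_eq, ← hxy]; exact ha
    refine ⟨a :: l, by simp [hl], ⟨hxl, ha⟩, ⟨hyl, ha'⟩, ?_⟩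
    obtain ⟨s, hs, hs'⟩ := hx.2 l a ⟨hxl, ha⟩
    obtain ⟨t, ht, ht'⟩ := hy.2 l a ⟨hyl, ha'⟩
    have : s = t := code_injective (by rw [← hs, ← ht, hxy])
    rw [hs', ht', this]

/-- The outcome of the task `l.length` and the cue are those prescribed by the state. -/
lemma space_step {x : HC} (hx : x ∈ τ.space) {l : List ℕ} {a : ℕ} (h : x ∈ τ.follows (a :: l)) :
    ∃ s, x (free l 0) = code s ∧ x ∈ τ.outcome l.length a (τ.pick l a s) ∧
      x (cueDir l a) = cueVal (cueSt (τ.next l a s)) := by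
  obtain ⟨s, hs, hs'⟩ := hx.2 l a h
  obtain ⟨t, ht, hn, _⟩ := hx.1 _ h
  have hts : t = τ.next l a s := code_injective (by rw [← ht, hs'])
  subst hts
  refine ⟨s, hs, ?_, hn.1.2.2⟩
  have := hn.1.2.1
  simpa using this

/-- The cue coordinate of a point whose signs are all nonzero differs from the predicted one. -/
lemma disjoint_captured (m : ℕ) : Disjoint τ.space (captured (τ.ψ m) (τ.F m)) := by
  rw [Set.disjoint_left]
  rintro x hx ⟨hne, hF⟩
  obtain ⟨l, rfl, hl, -, -⟩ := τ.exists_common_path hx hx rfl m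
  obtain ⟨a, ha⟩ := τ.exists_chooses (hx.1 l hl)
  obtain ⟨s, hs, ho, hc⟩ := τ.space_step hx (l := l) (a := a) ⟨hl, ha⟩
  cases a with
  | succ i => exact hne i ho
  | zero =>
    have hz : (fun i => decide (0 < τ.ψ l.length i x)) = τ.pick l 0 s := by
      funext i
      have h1 := ho i
      cases h : τ.pick l 0 s i with
      | false =>
        rw [h] at h1
        simpa using h1
      | true =>
        rw [h] at h1
        simpa using lt_of_le_of_ne (by simpa using h1) (hne i).symm
    rw [hz] at hF
    have h2 := τ.cueSt_next l 0 s
    rw [hF] at h2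
    cases hb : cueSt (τ.next l 0 s) with
    | false =>
      rw [hb] at hc h2
      have h3 : ¬ ((1 / 2 : ℝ) ≤ x (cueDir l 0)) := by simpa using h2
      rw [hc] at h3
      norm_num [cueVal] at h3
    | true =>
      rw [hb] at hc h2
      have h3 : (1 / 2 : ℝ) ≤ x (cueDir l 0) := by simpa using h2
      rw [hc] at h3
      norm_num [cueVal] at h3

/-- If the tasks include all coordinates, points are determined by their first coordinate: it
codes the initial state, which determines all later states, and hence the outcome of every task. -/
lemma space_inj (hco : ∀ j : ℕ, ∃ m, ∀ i (x : HC), τ.ψ m i x =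
    (x j : ℝ) - TopologicalSpace.denseSeq unitInterval i) {x y : HC} (hx : x ∈ τ.space)
    (hy : y ∈ τ.space) (h0 : x 0 = y 0) : x = y := by
  have key : ∀ x y : HC, x ∈ τ.space → y ∈ τ.space → x 0 = y 0 → ∀ j, y j ≤ x j := by
    intro x y hx hy h0 j
    obtain ⟨m, hm⟩ := hco j
    obtain ⟨l', hl', hxl, hyl, hxy⟩ := τ.exists_common_path hx hy h0 (m + 1)
    cases l' with
    | nil => simp at hl'
    | cons a l =>
      have hlm : l.length = m := by simpa using hl'
      obtain ⟨s, hs, ho, -⟩ := τ.space_step hx hxl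
      obtain ⟨l2, hl2, hx2, hy2, hxy2⟩ := τ.exists_common_path hx hy h0 l.length
      have : l2 = l := τ.follows_unique hl2 hx2 hxl.1
      subst this
      obtain ⟨t, ht, ho', -⟩ := τ.space_step hy hyl
      have hst : s = t := code_injective (by rw [← hs, ← ht, hxy2])
      subst hst
      by_contra hlt
      rw [not_le] at hlt
      cases a with
      | succ i =>
        simp only [outcome, mem_ofPred_eq, hlm, hm] at ho ho'
        have h3 : (x j : ℝ) < y j := hlt
        linarith
      | zero =>
        obtain ⟨_, ⟨i, rfl⟩, h1, h2⟩ :=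
          (TopologicalSpace.denseRange_denseSeq unitInterval).exists_between hlt
        have h1' : (x j : ℝ) < (TopologicalSpace.denseSeq unitInterval i : unitInterval) := h1
        have h2' : ((TopologicalSpace.denseSeq unitInterval i : unitInterval) : ℝ) < y j := h2
        have h3 := ho i
        have h4 := ho' i
        simp only [hlm, hm] at h3 h4
        split_ifs at h3 h4 <;> linarith
  funext j
  exact le_antisymm (key y x hy hx h0.symm j) (key x y hx hy h0 j)

end Tasks

/-! ### The space is not countable-dimensional -/

namespace Tasks

variable (τ : Tasks)

/-- The relation between states and points on arrival at a node, before the conditions of the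
node itself are imposed. -/
noncomputable def preNode : List ℕ → Set (Cn × HC)
  | [] => univ
  | a :: l => τ.extend l a (τ.node l)

lemma node_eq : ∀ l, τ.node l = τ.preNode l ∩ nodeCond l
  | [] => by simp [node, preNode]
  | _ :: _ => rfl

/-- The conditions of a node use up two free directions. -/
lemma ess_slice {c : Cn} {g : ℕ → ℕ → HC → ℝ} (hg : ∀ m μ, Adm1 μ (g m μ))
    (hc : ∀ m μ, openCode c (Nat.pair m μ) = {x | g m μ x ≠ 0}) {l : List ℕ} {s : Cn}
    (hs : prevSt^[l.length] s = c) (h : Ess {x | (s, x) ∈ τ.preNode l} (range (free l))) :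
    Ess (τ.slice l s) (range fun i => free l (i + 2)) := by
  have h1 := h.cut (k := free l 0) ⟨0, rfl⟩ (adm1_coord _ (code s))
  have h2 := h1.cut (k := free l 1) ⟨⟨1, rfl⟩, fun h => by
    have := free_injective l (mem_singleton_iff.mp h); omega⟩ (hg l.length _)
  refine h2.mono ?_ ?_
  · rintro x ⟨⟨hx, hx0⟩, hx1⟩
    rw [slice, mem_ofPred, node_eq]
    refine ⟨hx, ?_, ?_⟩
    · exact Subtype.ext (sub_eq_zero.mp hx0)
    · simp only [hs, hc, mem_ofPred_eq, not_not]
      exact hx1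
  · rintro _ ⟨i, rfl⟩
    refine ⟨⟨⟨_, rfl⟩, fun h => ?_⟩, fun h => ?_⟩
    · have := free_injective l (mem_singleton_iff.mp h); omega
    · have := free_injective l (mem_singleton_iff.mp h); omega

/-- From an essential slice one can move on to the next node. -/
lemma ess_next {l : List ℕ} {s : Cn}
    (h : Ess (τ.slice l s) (range fun i => free l (i + 2))) :
    ∃ a, s ∈ τ.branchSet l a ∧ (∀ b < a, s ∉ τ.branchSet l b) ∧
      Ess {x | (τ.next l a s, x) ∈ τ.preNode (a :: l)} (range (free (a :: l))) := by
  classical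
  have hex := τ.exists_branch h
  refine ⟨Nat.find hex, Nat.find_spec hex, fun b hb => Nat.find_min hex hb, ?_⟩
  generalize ha : Nat.find hex = a
  have hm : s ∈ τ.branchSet l a := ha ▸ Nat.find_spec hex
  have h1 : Ess (τ.slice l s ∩ τ.outcome l.length a (τ.pick l a s)) (branchDirs l a) :=
    τ.pick_mem hm
  have h2 := h1.cut (k := cueDir l a) ⟨0, rfl⟩ (adm1_coord _ (cueVal (cueSt (τ.next l a s))))
  refine h2.mono ?_ ?_
  · rintro x ⟨⟨hx, hx0⟩, hx1⟩
    refine ⟨?_, ?_, ?_⟩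
    · rw [prevSt_next]; exact hx
    · simpa using hx0
    · exact Subtype.ext (sub_eq_zero.mp hx1)
  · rintro _ ⟨i, rfl⟩
    refine ⟨⟨i + 1, rfl⟩, fun h => ?_⟩
    have := free_injective l (mem_singleton_iff.mp h)
    have h3 : Nat.pair a (i + 1) = Nat.pair a 0 := by omega
    have := (Nat.pair_eq_pair.mp h3).2
    omega

/-- The space is not covered by countably many zero-dimensional sets. Partitions missing these sets
are coded in the initial state; the slices along the resulting path are essential, and a common
point of all of them lies in the space and on one partition missing each of the sets. -/
lemma not_sigmaZD : ¬ SigmaZD τ.space := by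
  rintro ⟨Z, hZc, hZ, hcov⟩
  obtain ⟨Zs, hZs⟩ : ∃ Zs : ℕ → Set HC, insert ∅ Z = range Zs :=
    (hZc.insert ∅).exists_eq_range (insert_nonempty _ _)
  have hZd : ∀ m, ZDim (Zs m) := by
    intro m
    have : Zs m ∈ insert ∅ Z := hZs ▸ mem_range_self m
    rcases this with h | h
    · rw [h]
      exact ⟨fun _ _ => false, ⟨Subsingleton.elim _ _⟩⟩
    · exact hZ _ h
  choose g hg hgne using fun m μ => (hZd m).exists_separator μ
  obtain ⟨c, hc⟩ := exists_openCode (fun e => {x | g e.unpair.1 e.unpair.2 x ≠ 0}) (fun e =>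
    isOpen_ne_fun (hg _ _).cont continuous_const)
  have hc' : ∀ m μ, openCode c (Nat.pair m μ) = {x | g m μ x ≠ 0} := by
    intro m μ; rw [hc]; simp
  let St := {p : List ℕ × Cn // prevSt^[p.1.length] p.2 = c ∧
    Ess {x | (p.2, x) ∈ τ.preNode p.1} (range (free p.1))}
  have hstep : ∀ p : St, ∃ q : St, ∃ a, p.1.2 ∈ τ.branchSet p.1.1 a ∧
      (∀ b < a, p.1.2 ∉ τ.branchSet p.1.1 b) ∧ q.1 = (a :: p.1.1, τ.next p.1.1 a p.1.2) := by
    rintro ⟨⟨l, s⟩, hs, he⟩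
    obtain ⟨a, h1, h2, h3⟩ := τ.ess_next (τ.ess_slice hg hc' hs he)
    refine ⟨⟨(a :: l, τ.next l a s), ?_, h3⟩, a, h1, h2, rfl⟩
    simpa [Function.iterate_succ_apply] using hs
  choose nx br hbr hmin hnx using hstep
  let σ : ℕ → St := fun n => Nat.rec ⟨([], c), rfl, ess_univ.mono (fun _ _ => mem_univ _)
    (subset_univ _)⟩ (fun _ p => nx p) n
  have hσ : ∀ m, (σ (m + 1)).1 =
      (br (σ m) :: (σ m).1.1, τ.next (σ m).1.1 (br (σ m)) (σ m).1.2) := fun m => hnx (σ m)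
  have hlen : ∀ m, (σ m).1.1.length = m := by
    intro m
    induction m with
    | zero => rfl
    | succ m ih => rw [hσ]; simp [ih]
  have hess : ∀ m, Ess (τ.slice (σ m).1.1 (σ m).1.2) (range fun i => free (σ m).1.1 (i + 2)) :=
    fun m => τ.ess_slice hg hc' (σ m).2.1 (σ m).2.2
  obtain ⟨x, hx⟩ := IsCompact.nonempty_iInter_of_sequence_nonempty_isCompact_isClosed
    (fun m => τ.slice (σ m).1.1 (σ m).1.2)
    (fun m x hx => by
      simp only [hσ] at hx
      have := hx.1.1
      rw [prevSt_next] at this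
      exact this)
    (fun m => (hess m).nonempty) (τ.isClosed_slice _ _).isCompact
    (fun m => τ.isClosed_slice _ _)
  have hx : ∀ m, ((σ m).1.2, x) ∈ τ.node (σ m).1.1 := fun m => mem_iInter.mp hx m
  have hcond := fun m => τ.node_subset_nodeCond _ (hx m)
  have hch : ∀ m, x ∈ τ.chooses (σ m).1.1 (br (σ m)) := by
    intro m
    have h0 : x (free (σ m).1.1 0) = code (σ m).1.2 := (hcond m).1
    refine ⟨?_, fun b hb => ?_⟩
    · rw [h0]; exact mem_image_of_mem _ (hbr _)
    · rw [h0]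
      rintro ⟨s', hs', he'⟩
      rw [code_injective he'] at hs'
      exact hmin _ b hb hs'
  have hfol : ∀ m, x ∈ τ.follows (σ m).1.1 := by
    intro m
    induction m with
    | zero => exact mem_univ _
    | succ m ih => rw [hσ]; exact ⟨ih, hch m⟩
  have hxs : x ∈ τ.space := by
    refine ⟨fun l hl => ?_, fun l a hl => ?_⟩
    · have : l = (σ l.length).1.1 := τ.follows_unique (hlen _).symm hl (hfol _)
      rw [this]
      exact ⟨_, (hcond _).1, hx _, hess _⟩
    · have : a :: l = (σ (l.length + 1)).1.1 :=
        τ.follows_unique (hlen (l.length + 1)).symm hl (hfol (l.length + 1))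
      have h2 := (hcond (l.length + 1)).1
      rw [hσ] at this h2
      simp only [List.cons.injEq] at this
      obtain ⟨h3, h4⟩ := this
      simp only at h2
      rw [← h3, ← h4] at h2
      have h5 := (hcond l.length).1
      rw [← h4] at h5
      exact ⟨_, h5, h2⟩
  obtain ⟨B, hB, hxB⟩ := hcov hxs
  obtain ⟨m, rfl⟩ : B ∈ range Zs := hZs ▸ mem_insert_of_mem _ hB
  have h1 := (hcond m).2
  rw [(σ m).2.1, hlen] at h1
  simp only [hc', mem_ofPred_eq, not_not] at h1
  exact hgne m _ x hxB h1

lemma zero_mem_range_code {x : HC} (hx : x ∈ τ.space) : x 0 ∈ range code := by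
  obtain ⟨s, hs, -⟩ := hx.1 [] (mem_univ _)
  exact ⟨s, hs.symm⟩

/-- The first coordinate is continuous and injective on the Borel set `τ.space`, so its inverse is
measurable by the Lusin–Souslin theorem. -/
lemma exists_measurable_inverse (hco : ∀ j : ℕ, ∃ m, ∀ i (x : HC), τ.ψ m i x =
    (x j : ℝ) - TopologicalSpace.denseSeq unitInterval i) :
    ∃ f : Cn → HC, Measurable f ∧ ∀ x ∈ τ.space, f (dec (x 0)) = x := by
  have hc : Continuous fun x : τ.space => dec (x.1 0) :=
    continuousOn_dec.comp_continuous
      ((continuous_apply 0).comp continuous_subtype_val) fun x => τ.zero_mem_range_code x.2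
  have hinj : Function.Injective fun x : τ.space => dec (x.1 0) := by
    intro x y hxy
    refine Subtype.ext (τ.space_inj hco x.2 y.2 ?_)
    rw [← code_dec (τ.zero_mem_range_code x.2), ← code_dec (τ.zero_mem_range_code y.2)]
    exact congrArg code hxy
  have : StandardBorelSpace τ.space := τ.isGδ_space.measurableSet.standardBorel
  obtain ⟨f, hf, hfx⟩ := (hc.measurable.measurableEmbedding hinj).exists_measurable_extend
    (measurable_subtype_coe (p := fun x => x ∈ τ.space)) fun _ => inferInstance
  exact ⟨f, hf, fun x hx => congrFun hfx ⟨x, hx⟩⟩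

end Tasks

/-! ### The transfinite family -/

/-- The properties of the spaces in the family: `f` recovers a point from its first coordinate. -/
structure Good (P : Set HC) (f : Cn → HC) : Prop where
  isGδ : IsGδ P
  meas : Measurable f
  code_mem : ∀ x ∈ P, x 0 ∈ range code
  inv : ∀ x ∈ P, f (dec (x 0)) = x
  not_sigmaZD : ¬ SigmaZD P

/-- A space as in `Good` that avoids the traps of countably many given maps. -/
lemma exists_good (fs : ℕ → Cn → HC) (hfs : ∀ n, Measurable (fs n)) :
    ∃ (P : Set HC) (f : Cn → HC), Good P f ∧ ∀ n k j, Disjoint P (trapSet (fs n) k j) := by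
  choose ψ F hψ hF hsub using fun n k j => trapSet_captured (hfs n) k j
  -- task `pair 0 j` reads the coordinate `j`, task `pair (n + 1) (pair k j)` avoids a trap
  let τ : Tasks :=
    { ψ := fun m i x => match m.unpair.1 with
        | 0 => (x m.unpair.2 : ℝ) - TopologicalSpace.denseSeq unitInterval i
        | n + 1 => ψ n m.unpair.2.unpair.1 m.unpair.2.unpair.2 i x
      F := fun m z => match m.unpair.1 with
        | 0 => fun _ => 0
        | n + 1 => F n m.unpair.2.unpair.1 m.unpair.2.unpair.2 z
      cont := fun m i => by
        rcases m.unpair.1 with _ | n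
        · simp only; fun_prop
        · exact hψ _ _ _ _
      meas := fun m => by
        rcases m.unpair.1 with _ | n
        · exact measurable_const
        · exact hF _ _ _ }
  have hco : ∀ j : ℕ, ∃ m, ∀ i (x : HC), τ.ψ m i x =
      (x j : ℝ) - TopologicalSpace.denseSeq unitInterval i := fun j =>
    ⟨Nat.pair 0 j, fun i x => by simp [τ]⟩
  obtain ⟨f, hf, hfx⟩ := τ.exists_measurable_inverse hco
  refine ⟨τ.space, f, ⟨τ.isGδ_space, hf, fun x hx => τ.zero_mem_range_code hx, hfx,
    τ.not_sigmaZD⟩, fun n k j => ?_⟩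
  have h := τ.disjoint_captured (Nat.pair (n + 1) (Nat.pair k j))
  refine h.mono_right ?_
  simpa [τ] using hsub n k j

/-- A subset of a space that avoids all traps of `f` is zero-dimensional as soon as it embeds into
the space belonging to `f`: the coordinates of its points omit all codes of the embedding. -/
lemma zdim_of_trap {P Q A : Set HC} {f : Cn → HC} (hQ : Good Q f)
    (hP : ∀ k j, Disjoint P (trapSet f k j)) (hA : A ⊆ P) {φ : A → HC}
    (hφ : Topology.IsInducing φ) (hφQ : ∀ x, φ x ∈ Q) : ZDim A := by
  have hh : Continuous fun x : A => dec (φ x 0) :=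
    continuousOn_dec.comp_continuous ((continuous_apply 0).comp hφ.continuous)
      fun x => hQ.code_mem _ (hφQ x)
  have hU : ∀ i b, ∃ U : Set HC, IsOpen U ∧ ∀ x : A, (x : HC) ∈ U ↔ dec (φ x 0) i = b := by
    intro i b
    have : IsOpen {x : A | dec (φ x 0) i = b} :=
      (isOpen_discrete {b}).preimage ((continuous_apply i).comp hh)
    obtain ⟨U, hU, he⟩ := isOpen_induced_iff.mp this
    exact ⟨U, hU, fun x => by
      have := congrArg (fun S : Set A => x ∈ S) he
      simpa using this⟩
  have hV : ∀ p, ∃ V : Set HC, IsOpen V ∧ ∀ x : A, φ x ∈ V ↔ (x : HC) ∈ bitSet p := by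
    intro p
    have : IsOpen {x : A | (x : HC) ∈ bitSet p} :=
      (isOpen_bitSet p).preimage continuous_subtype_val
    obtain ⟨V, hV, he⟩ := hφ.isOpen_iff.mp this
    exact ⟨V, hV, fun x => by
      have := congrArg (fun S : Set A => x ∈ S) he
      simpa using this⟩
  choose U hUo hU using hU
  choose V hVo hV using hV
  obtain ⟨r, hr⟩ := exists_openCode
    (fun e => if e % 2 = 0 then V (e / 2) else U (e / 2 / 2) (decide (e / 2 % 2 = 1)))
    (fun e => by split_ifs <;> simp [hUo, hVo])
  have hr0 : ∀ p, openCode r (2 * p) = V p := by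
    intro p; rw [hr]; simp
  have hr1 : ∀ i b, openCode r (bitIdx i b) = U i b := by
    intro i b
    rw [hr]
    have h1 : bitIdx i b % 2 ≠ 0 := by simp only [bitIdx]; omega
    have h2 : bitIdx i b / 2 = 2 * i + b.toNat := by simp only [bitIdx]; omega
    rw [if_neg h1, h2]
    cases b
    · simp
    · have h3 : (2 * i + true.toNat) / 2 = i := by simp; omega
      have h4 : (2 * i + true.toNat) % 2 = 1 := by simp
      rw [h3, h4]; simp
  -- A coordinate equal to some `codeJ j r` would put the point into a trap.
  refine zdim_of_coords (fun _ j => codeJ j r) fun k => Or.inr ⟨denseRange_codeJ r, ?_⟩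
  intro x hx j hj
  refine Set.disjoint_left.mp (hP k j) (hA hx) ⟨r, dec (φ ⟨x, hx⟩ 0), hj, fun i => ?_, ?_⟩
  · rw [hr1, hr1, hU _ _ ⟨x, hx⟩, hU _ _ ⟨x, hx⟩]
    simp
  · rw [hQ.inv _ (hφQ _)]
    exact codedMap_eq fun p => by rw [hr0, hV p ⟨x, hx⟩]

lemma countable_Iio_of_lt_omega1 {α : Ordinal} (h : α < (Cardinal.aleph 1).ord) :
    (Iio α).Countable := by
  have h1 : α.card < Cardinal.aleph 1 := Cardinal.lt_ord.mp h
  rw [← Cardinal.le_aleph0_iff_set_countable, Cardinal.mk_Iio_ordinal, Cardinal.lift_le_aleph0]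
  rw [← Cardinal.succ_aleph0] at h1
  exact Order.lt_succ_iff.mp h1

/-- A sequence of spaces indexed by the countable ordinals, each of which avoids the traps of all
its predecessors. -/
def IsFamily (P : Ordinal → Set HC) (f : Ordinal → Cn → HC) : Prop :=
  ∀ α < (Cardinal.aleph 1).ord, Good (P α) (f α) ∧
    ∀ β < α, ∀ k j, Disjoint (P α) (trapSet (f β) k j)

/-- The family is built by transfinite recursion; every countable ordinal has only countably many
predecessors whose traps have to be avoided. -/
lemma exists_family : ∃ (P : Ordinal → Set HC) (f : Ordinal → Cn → HC),
    IsFamily P f := by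
  classical
  let step : ∀ α : Ordinal, (∀ β, β < α → Set HC × (Cn → HC)) → Set HC × (Cn → HC) :=
    fun α prev => if h : ∃ g : Set HC × (Cn → HC), Good g.1 g.2 ∧
      ∀ β (hβ : β < α) k j, Disjoint g.1 (trapSet (prev β hβ).2 k j) then h.choose
      else (∅, fun _ _ => 0)
  let fam : Ordinal → Set HC × (Cn → HC) := WellFounded.fix Ordinal.lt_wf step
  have hfam : ∀ α, fam α = step α fun β _ => fam β := fun α =>
    WellFounded.fix_eq Ordinal.lt_wf step α
  refine ⟨fun α => (fam α).1, fun α => (fam α).2, fun α => ?_⟩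
  induction α using WellFoundedLT.induction with
  | _ α ih =>
    intro hα
    have hex : ∃ g : Set HC × (Cn → HC), Good g.1 g.2 ∧
        ∀ β (_ : β < α) k j, Disjoint g.1 (trapSet (fam β).2 k j) := by
      have hcount : (insert (fun _ _ => 0) ((fun β => (fam β).2) '' Iio α)).Countable :=
        ((countable_Iio_of_lt_omega1 hα).image _).insert _
      obtain ⟨fs, hfs⟩ := hcount.exists_eq_range (insert_nonempty _ _)
      have hm : ∀ n, Measurable (fs n) := by
        intro n
        have : fs n ∈ insert (fun _ _ => 0) ((fun β => (fam β).2) '' Iio α) :=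
          hfs ▸ mem_range_self n
        rcases this with h | ⟨β, hβ, h⟩
        · rw [h]; exact measurable_const
        · rw [← h]; exact (ih β hβ (lt_trans hβ hα)).1.meas
      obtain ⟨P, f, hg, hd⟩ := exists_good fs hm
      refine ⟨(P, f), hg, fun β hβ k j => ?_⟩
      obtain ⟨n, hn⟩ : (fam β).2 ∈ range fs :=
        hfs ▸ mem_insert_of_mem _ (mem_image_of_mem _ hβ)
      rw [← hn]
      exact hd n k j
    have he : fam α = hex.choose := by rw [hfam]; exact dif_pos hex
    simp only [he]
    exact hex.choose_spec

/-- The subsets of one space of the family that embed into another one are zero-dimensional. -/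
lemma zdim_of_ne {P : Ordinal → Set HC} {f : Ordinal → Cn → HC}
    (h : IsFamily P f) {α β : Ordinal}
    (hα : α < (Cardinal.aleph 1).ord) (hβ : β < (Cardinal.aleph 1).ord) (hne : α ≠ β)
    {A : Set HC} (hA : A ⊆ P α) {φ : A → HC} (hφ : Topology.IsEmbedding φ)
    (hφQ : ∀ x, φ x ∈ P β) : ZDim A := by
  rcases lt_or_gt_of_ne hne with hlt | hlt
  · have hB : ZDim (range φ) := by
      refine zdim_of_trap (h α hα).1 ((h β hβ).2 α hlt) (range_subset_iff.mpr hφQ)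
        (φ := fun y => (hφ.toHomeomorph.symm y : HC)) ?_ fun y => hA (Subtype.coe_prop _)
      exact Topology.IsInducing.subtypeVal.comp hφ.toHomeomorph.symm.isInducing
    exact hB.of_isInducing hφ.toHomeomorph.isInducing
  · exact zdim_of_trap (h β hβ).1 ((h α hα).2 β hlt) hA hφ.isInducing hφQ

/-! ### Compactifications and shrinking copies -/

lemma exists_zero_function {C : Set HC} (hC : IsClosed C) :
    ∃ b : HC → unitInterval, Continuous b ∧ ∀ x, b x = 0 ↔ x ∈ C := by
  let _ := TopologicalSpace.metrizableSpaceMetric HC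
  rcases C.eq_empty_or_nonempty with rfl | hne
  · exact ⟨fun _ => 1, continuous_const, by simp⟩
  · refine ⟨fun x => projIcc 0 1 zero_le_one (Metric.infDist x C),
      continuous_projIcc.comp (Metric.continuous_infDist_pt C), fun x => ?_⟩
    rw [hC.mem_iff_infDist_zero hne]
    constructor
    · intro h
      have := (projIcc_eq_left (zero_lt_one (α := ℝ))).mp h
      exact le_antisymm this Metric.infDist_nonneg
    · intro h
      exact (projIcc_eq_left (zero_lt_one (α := ℝ))).mpr h.le

/-- A map of the cube to itself which embeds a given `Gδ` set and sends all other points to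
sequences that vanish from some index on; its range is a compactification with small remainder. -/
lemma exists_compactification {P : Set HC} (hP : IsGδ P) : ∃ e : HC → HC, Continuous e ∧
    Topology.IsEmbedding (fun x : P => e x) ∧ ∀ x ∉ P, ∃ N, ∀ i ≥ N, e x i = 0 := by
  obtain ⟨U, hU, rfl⟩ := hP.eq_iInter_nat
  choose b hb hb0 using fun n => exists_zero_function (hU n).isClosed_compl
  have hne : ∀ x ∈ ⋂ n, U n, ∀ n, ∏ j ∈ Finset.range (n + 1), b j x ≠ 0 := by
    intro x hx n
    rw [Finset.prod_ne_zero_iff]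
    intro j _ h
    exact (hb0 j x).mp h (mem_iInter.mp hx j)
  have hc : ∀ n, Continuous fun x => ∏ j ∈ Finset.range (n + 1), b j x := fun n =>
    continuous_finsetProd _ fun j _ => hb j
  -- Products of functions vanishing exactly off `U j`, alternately with and without the factor
  -- `x n`; the quotients recover `x` continuously on the intersection of the `U j`.
  set e : HC → HC := fun x i => if i % 2 = 0 then
    (∏ j ∈ Finset.range (i / 2 + 1), b j x) * x (i / 2)
    else ∏ j ∈ Finset.range (i / 2 + 1), b j x with he
  have he0 : ∀ x n, e x (2 * n) = (∏ j ∈ Finset.range (n + 1), b j x) * x n := by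
    intro x n; simp [he]
  have he1 : ∀ x n, e x (2 * n + 1) = ∏ j ∈ Finset.range (n + 1), b j x := by
    intro x n
    have h1 : (2 * n + 1) % 2 = 1 := by omega
    have h2 : (2 * n + 1) / 2 = n := by omega
    simp [he, h1, h2]
  have hec : Continuous e := by
    refine continuous_pi fun i => ?_
    simp only [he]
    split_ifs
    · exact (hc _).mul (continuous_apply _)
    · exact hc _
  refine ⟨e, hec, ?_, fun x hx => ?_⟩
  · let W : Set HC := {z | ∀ n, z (2 * n + 1) ≠ 0}
    let e' : (⋂ n, U n : Set HC) → W := fun x => ⟨e x, fun n => by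
      rw [he1]; exact hne x x.2 n⟩
    let g : W → HC := fun z n =>
      projIcc 0 1 zero_le_one ((z.1 (2 * n) : ℝ) / (z.1 (2 * n + 1) : ℝ))
    have hg : Continuous g := by
      refine continuous_pi fun n => continuous_projIcc.comp ?_
      refine Continuous.div ?_ ?_ fun z hz => z.2 n (Subtype.ext hz)
      · exact continuous_subtype_val.comp ((continuous_apply _).comp continuous_subtype_val)
      · exact continuous_subtype_val.comp ((continuous_apply _).comp continuous_subtype_val)
    have hge : g ∘ e' = Subtype.val := by
      funext x n
      have h1 : ((∏ j ∈ Finset.range (n + 1), b j x : unitInterval) : ℝ) ≠ 0 := fun h =>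
        hne x x.2 n (Subtype.ext h)
      have h2 : ((e x (2 * n) : unitInterval) : ℝ) / (e x (2 * n + 1) : unitInterval) =
          ((x : HC) n : ℝ) := by
        rw [he0, he1, Set.Icc.coe_mul]
        field_simp
      simp only [Function.comp_apply, g, e', h2]
      exact projIcc_val _ _
    have h3 : Topology.IsEmbedding e' := by
      refine Topology.IsEmbedding.of_comp (g := g) ?_ hg ?_
      · exact (hec.comp continuous_subtype_val).subtype_mk _
      · rw [hge]; exact Topology.IsEmbedding.subtypeVal
    exact Topology.IsEmbedding.subtypeVal.comp h3
  · obtain ⟨m, hm⟩ : ∃ m, x ∉ U m := by simpa using hx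
    have hz : ∀ n ≥ m, ∏ j ∈ Finset.range (n + 1), b j x = 0 := fun n hn =>
      Finset.prod_eq_zero (i := m) (by simp; omega) ((hb0 m x).mpr hm)
    refine ⟨2 * m, fun i hi => ?_⟩
    simp only [he]
    rw [hz (i / 2) (by omega)]
    simp

/-- A copy of the cube of size `1 / (k + 1)`, with first coordinate `1 / (k + 1)`. -/
noncomputable def shrink (k : ℕ) (z : HC) : HC := fun i =>
  match i with
  | 0 => ⟨1 / (k + 1), by positivity, by rw [div_le_one (by positivity)]; simp⟩
  | i + 1 => ⟨1 / (k + 1), by positivity, by rw [div_le_one (by positivity)]; simp⟩ * z i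

lemma continuous_shrink (k : ℕ) : Continuous (shrink k) := by
  refine continuous_pi fun i => ?_
  cases i with
  | zero => exact continuous_const
  | succ i => exact continuous_const.mul (continuous_apply i)

lemma shrink_le (k : ℕ) (z : HC) (i : ℕ) : (shrink k z i : ℝ) ≤ 1 / (k + 1) := by
  cases i with
  | zero => exact le_rfl
  | succ i =>
    exact mul_le_of_le_one_right (by positivity) (z i).2.2

lemma isEmbedding_shrink (k : ℕ) : Topology.IsEmbedding (shrink k) := by
  refine ((continuous_shrink k).isClosedEmbedding fun z w h => ?_).isEmbedding
  funext i
  have h1 := congrArg Subtype.val (congrFun h (i + 1))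
  have h2 : (1 / ((k : ℝ) + 1)) * (z i : ℝ) = (1 / ((k : ℝ) + 1)) * (w i : ℝ) := h1
  exact Subtype.ext (mul_left_cancel₀ (by positivity) h2)

/-- The copies of compact sets shrink to a point. -/
lemma isCompact_wedge {X : ℕ → Set HC} (hX : ∀ k, IsCompact (X k)) :
    IsCompact (insert 0 (⋃ k, shrink k '' X k) : Set HC) := by
  let f : (Σ k, X k) → HC := fun p => shrink p.1 p.2
  have hf : Continuous f := continuous_sigma fun k =>
    (continuous_shrink k).comp continuous_subtype_val
  have hr : (⋃ k, shrink k '' X k) = range f := by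
    ext y
    simp [f]
  have hcomp : ∀ k, CompactSpace (X k) := fun k => isCompact_iff_compactSpace.mp (hX k)
  rw [hr]
  refine Filter.Tendsto.isCompact_insert_range_of_cocompact ?_ hf
  rw [tendsto_pi_nhds]
  intro i
  rw [tendsto_subtype_rng, Metric.tendsto_nhds]
  intro ε hε
  obtain ⟨N, hN⟩ := exists_nat_one_div_lt hε
  rw [Filter.Eventually, Filter.mem_cocompact]
  refine ⟨⋃ k ∈ Finset.range N, Sigma.mk k '' univ, (Finset.range N).isCompact_biUnion fun k _ =>
    isCompact_univ.image continuous_sigmaMk, ?_⟩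
  rintro ⟨k, z⟩ hk
  have hk : N ≤ k := by
    by_contra h
    exact hk (mem_biUnion (by simpa using h) ⟨z, mem_univ _, rfl⟩)
  have h1 := shrink_le k z i
  have h2 : (1 : ℝ) / (k + 1) ≤ 1 / (N + 1) := Nat.one_div_le_one_div hk
  have h0 := (shrink k z i).2.1
  have h3 : dist ((shrink k z i : unitInterval) : ℝ) 0 < ε := by
    rw [Real.dist_0_eq_abs, abs_of_nonneg h0]; linarith
  exact h3

/-! ### Wedges and the order embedding -/

/-- `K` is a union of a point and of copies of the sets `X α` with `α ∈ S`. -/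
def IsWedge (X : Ordinal → Set HC) (S : Set Ordinal) (K : Set HC) : Prop :=
  ∃ j : Ordinal → HC → HC, (∀ α, Topology.IsEmbedding (j α)) ∧
    K = insert 0 (⋃ α ∈ S, j α '' X α)

lemma exists_wedge {X : Ordinal → Set HC} (hX : ∀ α, IsCompact (X α)) {S : Set Ordinal}
    (hS : S.Countable) : ∃ K, IsCompact K ∧ IsWedge X S K := by
  obtain ⟨ι, hι⟩ := countable_iff_exists_injOn.mp hS
  have hc : ∀ k, IsCompact (⋃ α ∈ {α ∈ S | ι α = k}, X α) := fun k =>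
    Set.Finite.isCompact_biUnion (Set.Subsingleton.finite fun α hα β hβ =>
      hι hα.1 hβ.1 (hα.2.trans hβ.2.symm)) fun α _ => hX α
  refine ⟨_, isCompact_wedge hc, fun α => shrink (ι α), fun α => isEmbedding_shrink _, ?_⟩
  congr 1
  ext y
  simp only [mem_iUnion, mem_image, mem_ofPred_eq, exists_prop]
  constructor
  · rintro ⟨_, x, ⟨α, ⟨hα, rfl⟩, hx⟩, rfl⟩; exact ⟨α, hα, x, hx, rfl⟩
  · rintro ⟨α, hα, x, hx, rfl⟩; exact ⟨_, x, ⟨α, ⟨hα, rfl⟩, hx⟩, rfl⟩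

lemma sigmaEmbeddable_of_cover {K L : Set HC} {C : Set (Set HC)} (hC : C.Countable)
    (hne : C.Nonempty) (hK : K ⊆ ⋃₀ C)
    (h : ∀ A ∈ C, ∃ ψ : A → HC, Topology.IsEmbedding ψ ∧ ∀ x, ψ x ∈ L) :
    SigmaEmbeddable K L := by
  obtain ⟨A, rfl⟩ := hC.exists_eq_range hne
  refine ⟨fun n => {y | (y : HC) ∈ A n}, ?_, fun n => ?_⟩
  · refine eq_univ_of_forall fun y => ?_
    obtain ⟨_, ⟨n, rfl⟩, hn⟩ := hK y.2
    exact mem_iUnion.mpr ⟨n, hn⟩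
  · obtain ⟨ψ, hψ, hψL⟩ := h _ ⟨n, rfl⟩
    have h1 : Topology.IsEmbedding fun y : {y : K | (y : HC) ∈ A n} => (⟨y.1.1, y.2⟩ : A n) :=
      (Topology.IsEmbedding.subtypeVal.comp Topology.IsEmbedding.subtypeVal).codRestrict _ _
    exact ⟨_, ⟨((hψ.comp h1).codRestrict L fun _ => hψL _).toHomeomorph⟩⟩

lemma IsWedge.sigmaEmbeddable {X : Ordinal → Set HC} {S T : Set Ordinal} {K L : Set HC}
    (hK : IsWedge X S K) (hL : IsWedge X T L) (hS : S.Countable) (h : S ⊆ T) :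
    SigmaEmbeddable K L := by
  obtain ⟨i, hi, rfl⟩ := hK
  obtain ⟨j, hj, rfl⟩ := hL
  refine sigmaEmbeddable_of_cover (C := insert {0} ((fun α => i α '' X α) '' S))
    ((hS.image _).insert _) (insert_nonempty _ _) ?_ ?_
  · rintro x (rfl | hx)
    · exact ⟨{0}, mem_insert _ _, rfl⟩
    · obtain ⟨α, hα, hx⟩ := mem_iUnion₂.mp hx
      exact ⟨_, mem_insert_of_mem _ ⟨α, hα, rfl⟩, hx⟩
  · rintro A (rfl | ⟨α, hα, rfl⟩)
    · exact ⟨Subtype.val, Topology.IsEmbedding.subtypeVal, fun x => Or.inl x.2⟩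
    · refine ⟨fun y => j α (((hi α).homeomorphImage (X α)).symm y), ?_, fun y => ?_⟩
      · exact (hj α).comp (Topology.IsEmbedding.subtypeVal.comp (Homeomorph.isEmbedding _))
      · exact Or.inr (mem_biUnion (h hα) ⟨_, Subtype.coe_prop _, rfl⟩)

/-- The maps `e α` are compactifications of the spaces `P α` as in `exists_compactification`. -/
def IsCompactifying (P : Ordinal → Set HC) (e : Ordinal → HC → HC) : Prop :=
  ∀ α < (Cardinal.aleph 1).ord, Continuous (e α) ∧
    Topology.IsEmbedding (fun x : P α => e α x) ∧ ∀ x ∉ P α, ∃ N, ∀ i ≥ N, e α x i = 0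

/-- A subset of a space of the family that embeds into a wedge not involving this space is
covered by countably many zero-dimensional sets. -/
lemma sigmaZD_of_embedding_wedge {P : Ordinal → Set HC} {f : Ordinal → Cn → HC}
    {e : Ordinal → HC → HC} (hfam : IsFamily P f) (he : IsCompactifying P e)
    {T : Set Ordinal} (hTc : T.Countable)
    (hT : ∀ β ∈ T, β < (Cardinal.aleph 1).ord) {L : Set HC}
    (hL : IsWedge (fun β => range (e β)) T L) {α : Ordinal} (hα : α < (Cardinal.aleph 1).ord)
    (hαT : α ∉ T) {D : Set HC} (hD : D ⊆ P α) {γ : D → HC} (hγ : Topology.IsEmbedding γ)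
    (hγL : ∀ x, γ x ∈ L) : SigmaZD D := by
  obtain ⟨j, hj, rfl⟩ := hL
  have hmain : ∀ β ∈ T, SigmaZD (γ ⁻¹' range fun y : P β => j β (e β y)) := by
    intro β hβ
    set G := γ ⁻¹' range fun y : P β => j β (e β y)
    have hν : Topology.IsEmbedding fun y : P β => j β (e β y) :=
      (hj β).comp (he β (hT β hβ)).2.1
    let ρ := (Topology.IsEmbedding.subtypeVal (p := fun x => x ∈ D)).homeomorphImage G
    have hr : Topology.IsEmbedding fun x : G =>
        (⟨γ x, x.2⟩ : range fun y : P β => j β (e β y)) :=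
      (hγ.comp Topology.IsEmbedding.subtypeVal).codRestrict _ fun x : G => x.2
    have hA : ZDim (Subtype.val '' G : Set HC) := by
      refine zdim_of_ne hfam hα (hT β hβ) (fun h => hαT (h ▸ hβ)) ?_
        (φ := fun x => (hν.toHomeomorph.symm ⟨γ (ρ.symm x), (ρ.symm x).2⟩ : HC)) ?_
        fun x => Subtype.coe_prop _
      · rintro _ ⟨x, -, rfl⟩; exact hD x.2
      · exact Topology.IsEmbedding.subtypeVal.comp
          (hν.toHomeomorph.symm.isEmbedding.comp (hr.comp ρ.symm.isEmbedding))
    exact (hA.of_isInducing ρ.isInducing).sigmaZD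
  have hrem : ∀ β, SigmaZD (γ ⁻¹' (j β '' {z : HC | ∃ N, ∀ i ≥ N, z i = 0})) := fun β =>
    (sigmaZD_eventually_zero.image (hj β)).preimage hγ.isInducing
  have hzero : SigmaZD (γ ⁻¹' {0}) := by
    refine SigmaZD.preimage (ZDim.sigmaZD ⟨fun _ _ => false, ?_⟩) hγ.isInducing
    exact (Topology.IsEmbedding.of_subsingleton _).isInducing
  have hTc' : Countable T := hTc
  have hall : SigmaZD (⋃ o : Option (T × Bool), match o with
      | none => γ ⁻¹' {0}
      | some (β, true) => γ ⁻¹' range fun y : P β => j β (e β y)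
      | some (β, false) => γ ⁻¹' (j β '' {z : HC | ∃ N, ∀ i ≥ N, z i = 0})) := by
    refine SigmaZD.iUnion fun o => ?_
    match o with
    | none => exact hzero
    | some (β, true) => exact hmain β β.2
    | some (β, false) => exact hrem β
  refine (hall.image (Topology.IsEmbedding.subtypeVal (p := fun x => x ∈ D))).subset ?_
  intro x hx
  refine ⟨⟨x, hx⟩, ?_, rfl⟩
  rcases hγL ⟨x, hx⟩ with h | h
  · exact mem_iUnion.mpr ⟨none, h⟩
  · obtain ⟨β, hβ, _, ⟨y, rfl⟩, hy⟩ := mem_iUnion₂.mp h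
    by_cases hyP : y ∈ P β
    · exact mem_iUnion.mpr ⟨some (⟨β, hβ⟩, true), ⟨y, hyP⟩, hy⟩
    · exact mem_iUnion.mpr ⟨some (⟨β, hβ⟩, false), e β y, (he β (hT β hβ)).2.2 y hyP, hy⟩

/-- If `α ∈ S \ T`, a σ-embedding of the wedges would cover `P α` by countably many
zero-dimensional sets. -/
lemma subset_of_sigmaEmbeddable {P : Ordinal → Set HC} {f : Ordinal → Cn → HC}
    {e : Ordinal → HC → HC} (hfam : IsFamily P f) (he : IsCompactifying P e)
    {S T : Set Ordinal} (hS : ∀ β ∈ S, β < (Cardinal.aleph 1).ord) (hTc : T.Countable)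
    (hT : ∀ β ∈ T, β < (Cardinal.aleph 1).ord) {K L : Set HC}
    (hK : IsWedge (fun β => range (e β)) S K) (hL : IsWedge (fun β => range (e β)) T L)
    (h : SigmaEmbeddable K L) : S ⊆ T := by
  intro α hα
  by_contra hαT
  refine (hfam α (hS α hα)).1.not_sigmaZD ?_
  obtain ⟨j, hj, rfl⟩ := hK
  obtain ⟨A, hA, hB⟩ := h
  choose B hB using hB
  let ε : P α → (insert 0 (⋃ α ∈ S, j α '' range (e α)) : Set HC) := fun x =>
    ⟨j α (e α x), Or.inr (mem_biUnion hα ⟨_, ⟨x, rfl⟩, rfl⟩)⟩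
  have hε : Topology.IsEmbedding ε :=
    ((hj α).comp (he α (hS α hα)).2.1).codRestrict _ fun x => (ε x).2
  have hcov : P α ⊆ ⋃ n, (Subtype.val '' (ε ⁻¹' A n) : Set HC) := by
    intro x hx
    obtain ⟨n, hn⟩ := mem_iUnion.mp (hA.symm ▸ mem_univ (ε ⟨x, hx⟩))
    exact mem_iUnion.mpr ⟨n, ⟨x, hx⟩, hn, rfl⟩
  refine (SigmaZD.iUnion fun n => ?_).subset hcov
  let ρ := (Topology.IsEmbedding.subtypeVal (p := fun x => x ∈ P α)).homeomorphImage (ε ⁻¹' A n)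
  have hr : Topology.IsEmbedding fun x : ε ⁻¹' A n => (⟨ε x, x.2⟩ : A n) :=
    (hε.comp Topology.IsEmbedding.subtypeVal).codRestrict _ _
  refine sigmaZD_of_embedding_wedge hfam he hTc hT hL (hS α hα) hαT
    (γ := fun x => (((hB n).some ⟨ε (ρ.symm x), (ρ.symm x).2⟩ : B n) : L)) ?_ ?_ ?_
  · rintro _ ⟨x, -, rfl⟩; exact x.2
  · exact Topology.IsEmbedding.subtypeVal.comp (Topology.IsEmbedding.subtypeVal.comp
      ((hB n).some.isEmbedding.comp (hr.comp ρ.symm.isEmbedding)))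
  · exact fun x => Subtype.coe_prop _

/-- The inclusion ordering of countable sets of countable ordinals embeds into the
σ-embeddability ordering of compact subsets of the Hilbert cube. -/
theorem stmt3 :
    ∃ F : Set Ordinal → Set (ℕ → unitInterval),
      (∀ S : Set Ordinal, S.Countable → (∀ o ∈ S, o < omega1) → IsCompact (F S)) ∧
      (∀ S T : Set Ordinal,
        S.Countable → (∀ o ∈ S, o < omega1) →
        T.Countable → (∀ o ∈ T, o < omega1) →
        (S ⊆ T ↔ SigmaEmbeddable ↥(F S) ↥(F T))) := by
  obtain ⟨P, f, hfam⟩ := exists_family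
  have hex : ∀ α, ∃ e : HC → HC, Continuous e ∧ (α < (Cardinal.aleph 1).ord →
      Topology.IsEmbedding (fun x : P α => e x) ∧ ∀ x ∉ P α, ∃ N, ∀ i ≥ N, e x i = 0) := by
    intro α
    by_cases hα : α < (Cardinal.aleph 1).ord
    · obtain ⟨e, h1, h2, h3⟩ := exists_compactification (hfam α hα).1.isGδ
      exact ⟨e, h1, fun _ => ⟨h2, h3⟩⟩
    · exact ⟨id, continuous_id, fun h => absurd h hα⟩
  choose e hec he using hex
  have he' : IsCompactifying P e := fun α hα => And.intro (hec α) (he α hα)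
  have hw : ∀ S : Set Ordinal, ∃ K : Set HC, S.Countable →
      IsCompact K ∧ IsWedge (fun β => range (e β)) S K := by
    intro S
    by_cases hS : S.Countable
    · obtain ⟨K, hK⟩ := exists_wedge (fun β => isCompact_range (hec β)) hS
      exact ⟨K, fun _ => hK⟩
    · exact ⟨∅, fun h => absurd h hS⟩
  choose F hF using hw
  refine ⟨F, fun S hS _ => (hF S hS).1, fun S T hSc hS hTc hT => ⟨fun h => ?_, fun h => ?_⟩⟩
  · exact (hF S hSc).2.sigmaEmbeddable (hF T hTc).2 hSc h
  · exact subset_of_sigmaEmbeddable hfam he' hS hTc hT (hF S hSc).2 (hF T hTc).2 h
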